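/- Let L ⊆ ℝ^n be a star set of finite Lebesgue measure (L need not be bounded). Then ∫_{S^{n-1}} ( V_{n-1}(L ∩ w^⊥) )^{n} d*w ≤ ( b_{n-1}^{n} / b_n^{n−1} ) · ( V_n(L) )^{n−1}. (This is the case k = n−1 of the Busemann intersection inequality ∫_{G_{n,k}} [V_k(L ∩ τ₀)]^n d*τ₀ ≤ (b_k^n/b_n^k)[V_n(L)]^k, which the paper derives, for arbitrary measurable star sets of finite measure, from the sharp L^p–L^q estimate for the k-plane transform.) -/

import Mathlib

open MeasureTheory Metric Real
open scoped ENNReal NNReal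

noncomputable section

/-- The normalized (probability) surface measure `d*θ` on the unit sphere of
`EuclideanSpace ℝ (Fin n)`. -/
def sphMeasure (n : ℕ) : Measure (sphere (0 : EuclideanSpace ℝ (Fin n)) 1) :=
  ((volume : Measure (EuclideanSpace ℝ (Fin n))).toSphere Set.univ)⁻¹ •
    (volume : Measure (EuclideanSpace ℝ (Fin n))).toSphere

/-- The hyperplane Radon transform: `Rf(θ,t) = ∫_{θ^⊥} f(tθ + y) dy`, where `θ^⊥` carries its
canonical Lebesgue measure as an (n-1)-dimensional inner product space. -/
def Radon (n : ℕ) (f : EuclideanSpace ℝ (Fin n) → ℝ≥0∞)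
    (θ : sphere (0 : EuclideanSpace ℝ (Fin n)) 1) (t : ℝ) : ℝ≥0∞ :=
  ∫⁻ y : ((ℝ ∙ (θ : EuclideanSpace ℝ (Fin n)))ᗮ),
    f (t • (θ : EuclideanSpace ℝ (Fin n)) + (y : EuclideanSpace ℝ (Fin n)))

/-- `b_m = π^{m/2}/Γ(m/2+1)`, the volume of the m-dimensional unit ball. -/
def ballVol (m : ℕ) : ℝ := Real.pi ^ ((m : ℝ) / 2) / Real.Gamma ((m : ℝ) / 2 + 1)

/-! Write a hyperplane as a graph `x₀ = a · y`, and let `L_a ⊆ ℝ^m` be the projection to the last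
`m = n - 1` coordinates of the section of `L` by this hyperplane. Points `x_i = (t_i, y_i)` of `L`
span the graph with coefficients `a` when `t_i = a · y_i`; this substitution, whose Jacobian is
`|det (y_i)|`, gives the linear Blaschke-Petkantschin formula
`|L|^m = ∫ M(L_a) da`, where `M(K) = ∫_{K^m} |det|`.

Busemann's random simplex inequality says that ellipsoids centred at the origin minimize `M` among
sets of given volume, that is `M(K) ≥ c |K|^{m+1}` with equality for balls. Here `M` does not
increase under Steiner symmetrization, since the determinant is linear in the zeroth coordinates of
the `m` points and an integral `∫ |∑ c_i t_i|` over a product of subsets of `ℝ` decreases when each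
of them is replaced by the centred interval of the same length. A linear isometry followed
by a symmetrization moves into the ball `B` with `|B| = |K|` an amount of `K` at least quadratic in
`|B \ K|`, so competitors of `K` come arbitrarily close to `B`. Sections of a centred ball are
centred ellipsoids, hence `c ∫ |L_a|^{m+1} da ≤ |L|^m` is an equality for balls.

Gnomonic projection `w ↦ a` turns the spherical mean of `|L ∩ w^⊥|^{m+1}` into a constant multiple
of `∫ |L_a|^{m+1} da`: the power `m + 1 = n` is the one for which the factor `|w₀|^{-1}` relating
`|L ∩ w^⊥|` to `|L_a|` is absorbed by the Jacobian. Both constants are eliminated by comparison with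
the unit ball.
-/

open Set Filter Function Topology

section Rearrangement

/-- The distribution function of Lebesgue measure on `K`, shifted so that its limits at `∓∞` are
`∓|K| / 2`. -/
def centeredCDF (K : Set ℝ) (t : ℝ) : ℝ :=
  volume.real (K ∩ Iic t) - volume.real K / 2

/-- The symmetric rearrangement of `K ⊆ ℝ`: the open interval of length `|K|` centred at `0`. -/
def symmInterval (K : Set ℝ) : Set ℝ :=
  Ioo (-(volume.real K / 2)) (volume.real K / 2)

open Classical in
/-- A right inverse of `centeredCDF K` on `symmInterval K`, which transports Lebesgue measure on
`symmInterval K` to Lebesgue measure on `K`. It is extended by the identity to all of `ℝ`. -/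
def centeredQuantile (K : Set ℝ) (s : ℝ) : ℝ :=
  if s ∈ symmInterval K then invFun (centeredCDF K) s else s

variable {K : Set ℝ}

lemma measurableSet_symmInterval (K : Set ℝ) : MeasurableSet (symmInterval K) :=
  measurableSet_Ioo

lemma neg_mem_symmInterval {s : ℝ} : -s ∈ symmInterval K ↔ s ∈ symmInterval K := by
  rw [symmInterval, mem_Ioo, mem_Ioo, neg_lt_neg_iff, neg_lt, and_comm]

lemma monotone_centeredCDF (hK : volume K ≠ ∞) : Monotone (centeredCDF K) := fun _ _ h ↦
  sub_le_sub_right (measureReal_mono (inter_subset_inter_right _ (Iic_subset_Iic.2 h))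
    (measure_ne_top_of_subset inter_subset_left hK)) _

lemma centeredCDF_sub_le (hK : volume K ≠ ∞) {s t : ℝ} (h : s ≤ t) :
    centeredCDF K t - centeredCDF K s ≤ t - s := by
  have hsub : K ∩ Iic t ⊆ K ∩ Iic s ∪ Ioc s t := fun x hx ↦
    (le_or_gt x s).imp (fun hs ↦ ⟨hx.1, hs⟩) (fun hs ↦ ⟨hs, hx.2⟩)
  have hfin : volume (K ∩ Iic s ∪ Ioc s t) ≠ ∞ :=
    measure_union_ne_top (measure_ne_top_of_subset inter_subset_left hK) measure_Ioc_lt_top.ne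
  have hle := (measureReal_mono hsub hfin).trans (measureReal_union_le _ _)
  rw [Real.volume_real_Ioc_of_le h] at hle
  unfold centeredCDF
  linarith

lemma continuous_centeredCDF (hK : volume K ≠ ∞) : Continuous (centeredCDF K) := by
  refine LipschitzWith.continuous (K := 1) (LipschitzWith.of_le_add fun x y ↦ ?_)
  rcases le_total x y with h | h
  · linarith [monotone_centeredCDF hK h, dist_nonneg (x := x) (y := y)]
  · have := centeredCDF_sub_le hK h
    rw [Real.dist_eq, abs_of_nonneg (sub_nonneg.2 h)]
    linarith

lemma centeredCDF_mem_Icc (hK : volume K ≠ ∞) (t : ℝ) :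
    centeredCDF K t ∈ Icc (-(volume.real K / 2)) (volume.real K / 2) := by
  have hle : volume.real (K ∩ Iic t) ≤ volume.real K := measureReal_mono inter_subset_left hK
  have hnonneg : 0 ≤ volume.real (K ∩ Iic t) := measureReal_nonneg
  constructor <;> unfold centeredCDF <;> linarith

lemma tendsto_centeredCDF_atTop (hK : volume K ≠ ∞) :
    Tendsto (centeredCDF K) atTop (𝓝 (volume.real K / 2)) := by
  have h := tendsto_measure_Iic_atTop (volume.restrict K)
  simp only [Measure.restrict_apply measurableSet_Iic, Measure.restrict_apply_univ,
    inter_comm _ K] at h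
  have hF := ((ENNReal.tendsto_toReal hK).comp h).sub_const (volume.real K / 2)
  rw [← measureReal_def, sub_half] at hF
  exact hF

lemma tendsto_centeredCDF_atBot (hK : volume K ≠ ∞) :
    Tendsto (centeredCDF K) atBot (𝓝 (-(volume.real K / 2))) := by
  have : IsFiniteMeasure (volume.restrict K) := isFiniteMeasure_restrict.2 hK
  have h := tendsto_measure_iInter_atBot (μ := volume.restrict K)
    (fun _ ↦ measurableSet_Iic.nullMeasurableSet) (monotone_Iic (α := ℝ))
    ⟨0, measure_ne_top _ _⟩
  have hempty : ⋂ t : ℝ, Iic t = ∅ := iInter_Iic_eq_empty_iff.2 (by simp [not_bddBelow_univ])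
  simp only [hempty, measure_empty, Measure.restrict_apply measurableSet_Iic, inter_comm _ K,
    Function.comp_def] at h
  have hF := ((ENNReal.tendsto_toReal ENNReal.zero_ne_top).comp h).sub_const (volume.real K / 2)
  rw [ENNReal.toReal_zero, zero_sub] at hF
  exact hF

lemma centeredCDF_centeredQuantile (hK : volume K ≠ ∞) {s : ℝ} (hs : s ∈ symmInterval K) :
    centeredCDF K (centeredQuantile K s) = s := by
  rw [centeredQuantile, if_pos hs]
  refine invFun_eq (mem_range_of_exists_le_of_exists_ge (continuous_centeredCDF hK) ?_ ?_)
  · exact ((tendsto_centeredCDF_atBot hK).eventually_le_const hs.1).exists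
  · exact ((tendsto_centeredCDF_atTop hK).eventually_const_le hs.2).exists

lemma sub_le_centeredQuantile_sub (hK : volume K ≠ ∞) {s t : ℝ} (hs : s ∈ symmInterval K)
    (ht : t ∈ symmInterval K) (h : s ≤ t) :
    t - s ≤ centeredQuantile K t - centeredQuantile K s := by
  have hs' := centeredCDF_centeredQuantile hK hs
  have ht' := centeredCDF_centeredQuantile hK ht
  rcases le_total (centeredQuantile K s) (centeredQuantile K t) with hle | hle
  · linarith [centeredCDF_sub_le hK hle]
  · have hst : t = s := le_antisymm (ht' ▸ hs' ▸ monotone_centeredCDF hK hle) h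
    simp only [hst, sub_self, le_refl]

lemma two_mul_abs_le_centeredQuantile (hK : volume K ≠ ∞) (s : ℝ) :
    2 * |s| ≤ |centeredQuantile K s - centeredQuantile K (-s)| := by
  by_cases hs : s ∈ symmInterval K
  · have hs' := neg_mem_symmInterval.2 hs
    rcases le_total 0 s with h | h
    · rw [abs_of_nonneg h]
      exact le_abs.2 (Or.inl (by linarith [sub_le_centeredQuantile_sub hK hs' hs (by linarith)]))
    · rw [abs_of_nonpos h]
      exact le_abs.2 (Or.inr (by linarith [sub_le_centeredQuantile_sub hK hs hs' (by linarith)]))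
  · have hs' : -s ∉ symmInterval K := neg_mem_symmInterval.not.2 hs
    rw [centeredQuantile, centeredQuantile, if_neg hs, if_neg hs', sub_neg_eq_add, ← two_mul,
      abs_mul, abs_two]

lemma measurable_centeredQuantile (hK : volume K ≠ ∞) : Measurable (centeredQuantile K) := by
  refine measurable_of_restrict_of_restrict_compl (measurableSet_symmInterval K) ?_ ?_
  · refine Monotone.measurable fun s t hst ↦ ?_
    have h := sub_le_centeredQuantile_sub hK s.2 t.2 hst
    have hst' : (s : ℝ) ≤ t := hst
    simp only [domRestrict_apply]
    linarith
  · convert measurable_subtype_coe (p := (· ∈ (symmInterval K)ᶜ)) using 1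
    ext s
    exact if_neg s.2

lemma volume_symmInterval_inter_centeredQuantile_le (hK : volume K ≠ ∞) (x : ℝ) :
    volume (symmInterval K ∩ {s | centeredQuantile K s ≤ x}) = volume (K ∩ Iic x) := by
  have hvol : volume (K ∩ Iic x) = .ofReal (centeredCDF K x - -(volume.real K / 2)) := by
    rw [centeredCDF, sub_neg_eq_add, sub_add_cancel,
      ofReal_measureReal (measure_ne_top_of_subset inter_subset_left hK)]
  obtain ⟨-, hx⟩ := centeredCDF_mem_Icc hK x
  rw [hvol]
  refine le_antisymm ?_ ?_
  · rw [← Real.volume_Ioc]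
    refine measure_mono fun s hs ↦ ⟨hs.1.1, ?_⟩
    exact centeredCDF_centeredQuantile hK hs.1 ▸ monotone_centeredCDF hK hs.2
  · rw [← Real.volume_Ioo]
    refine measure_mono fun s hs ↦ ?_
    have hsI : s ∈ symmInterval K := ⟨hs.1, hs.2.trans_le hx⟩
    have hlt : centeredCDF K (centeredQuantile K s) < centeredCDF K x :=
      (centeredCDF_centeredQuantile hK hsI).symm ▸ hs.2
    exact ⟨hsI, ((monotone_centeredCDF hK).reflect_lt hlt).le⟩

lemma measurePreserving_centeredQuantile (hK : volume K ≠ ∞) :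
    MeasurePreserving (centeredQuantile K) (volume.restrict (symmInterval K))
      (volume.restrict K) := by
  have hmeas := measurable_centeredQuantile hK
  have : IsFiniteMeasure (volume.restrict K) := isFiniteMeasure_restrict.2 hK
  refine ⟨hmeas, (Measure.ext_of_Iic _ _ fun x ↦ ?_).symm⟩
  rw [Measure.map_apply hmeas measurableSet_Iic,
    Measure.restrict_apply (hmeas measurableSet_Iic), Measure.restrict_apply measurableSet_Iic,
    inter_comm, ← volume_symmInterval_inter_centeredQuantile_le hK, inter_comm]
  rfl

end Rearrangement

section OddReplacement

variable {α : Type*} [MeasurableSpace α] {μ : Measure α} {T : α → α}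

lemma lintegral_abs_half_sub_comp_le (hT : MeasurePreserving T μ μ) {h : α → ℝ}
    (hh : Measurable h) :
    ∫⁻ x, .ofReal |(h x - h (T x)) / 2| ∂μ ≤ ∫⁻ x, .ofReal |h x| ∂μ := by
  have hm : Measurable fun x ↦ ENNReal.ofReal (|h x| / 2) := by fun_prop
  have hcomp : ∫⁻ x, .ofReal (|h (T x)| / 2) ∂μ = ∫⁻ x, .ofReal (|h x| / 2) ∂μ :=
    hT.lintegral_comp hm
  calc ∫⁻ x, .ofReal |(h x - h (T x)) / 2| ∂μ
      ≤ ∫⁻ x, (.ofReal (|h x| / 2) + .ofReal (|h (T x)| / 2)) ∂μ := by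
        refine lintegral_mono fun x ↦ ?_
        rw [← ENNReal.ofReal_add (by positivity) (by positivity)]
        refine ENNReal.ofReal_le_ofReal ?_
        rw [abs_div, abs_two, ← add_div]
        exact div_le_div_of_nonneg_right (abs_sub _ _) zero_le_two
    _ = ∫⁻ x, (.ofReal (|h x| / 2) + .ofReal (|h x| / 2)) ∂μ := by
        rw [lintegral_add_left hm, hcomp, lintegral_add_left hm]
    _ = ∫⁻ x, .ofReal |h x| ∂μ := by
        refine lintegral_congr fun x ↦ ?_
        rw [← ENNReal.ofReal_add (by positivity) (by positivity), add_halves]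

lemma abs_add_add_abs_sub_le {a u v : ℝ} (h : |u| ≤ |v|) :
    |a + u| + |a - u| ≤ |a + v| + |a - v| := by
  grind

lemma lintegral_abs_add_le_of_odd (hT : MeasurePreserving T μ μ) {a u v : α → ℝ}
    (ha : Measurable a) (hu : Measurable u) (hv : Measurable v) (haT : ∀ x, a (T x) = a x)
    (huT : ∀ x, u (T x) = -u x) (hvT : ∀ x, v (T x) = -v x) (huv : ∀ x, |u x| ≤ |v x|) :
    ∫⁻ x, .ofReal |a x + u x| ∂μ ≤ ∫⁻ x, .ofReal |a x + v x| ∂μ := by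
  have fold (w : α → ℝ) (hw : Measurable w) (hwT : ∀ x, w (T x) = -w x) :
      2 * ∫⁻ x, .ofReal |a x + w x| ∂μ = ∫⁻ x, .ofReal (|a x + w x| + |a x - w x|) ∂μ := by
    have hm : Measurable fun x ↦ ENNReal.ofReal |a x + w x| := by fun_prop
    simp only [ENNReal.ofReal_add (abs_nonneg _) (abs_nonneg _)]
    rw [lintegral_add_left hm, two_mul]
    nth_rw 2 [← hT.lintegral_comp hm]
    simp only [haT, hwT, ← sub_eq_add_neg]
  rw [← ENNReal.mul_le_mul_iff_right two_ne_zero ENNReal.ofNat_ne_top, fold u hu huT,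
    fold v hv hvT]
  exact lintegral_mono fun x ↦ ENNReal.ofReal_le_ofReal (abs_add_add_abs_sub_le (huv x))

variable {ι : Type*} [Fintype ι] {σ : ι → Measure ℝ} [∀ i, SigmaFinite (σ i)]

lemma measurePreserving_pi_update_neg [DecidableEq ι] (j : ι)
    (hσ : MeasurePreserving Neg.neg (σ j) (σ j)) :
    MeasurePreserving (fun t : ι → ℝ ↦ update t j (-t j)) (Measure.pi σ) (Measure.pi σ) := by
  convert measurePreserving_pi σ σ (f := update (fun _ ↦ id) j Neg.neg) fun i ↦ ?_ using 1
  · ext t i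
    rcases eq_or_ne i j with rfl | h
    · simp only [update_self]
    · simp only [update_of_ne h, id]
  · rcases eq_or_ne i j with rfl | h
    · simpa only [update_self] using hσ
    · simpa only [update_of_ne h] using MeasurePreserving.id (σ i)

lemma lintegral_pi_abs_sum_update_le [DecidableEq ι] (j : ι)
    (hσ : MeasurePreserving Neg.neg (σ j) (σ j)) {g : ι → ℝ → ℝ} (hg : ∀ i, Measurable (g i))
    (hgodd : ∀ s, g j (-s) = -g j s) {f : ℝ → ℝ} (hf : Measurable f)
    (hfodd : ∀ s, f (-s) = -f s) (hfg : ∀ s, |f s| ≤ |g j s|) :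
    ∫⁻ t, .ofReal |∑ i, update g j f i (t i)| ∂Measure.pi σ ≤
      ∫⁻ t, .ofReal |∑ i, g i (t i)| ∂Measure.pi σ := by
  have hsum (k : ι → ℝ → ℝ) (t : ι → ℝ) :
      ∑ i, k i (t i) = ∑ i ∈ Finset.univ.erase j, k i (t i) + k j (t j) :=
    (Finset.sum_erase_add _ _ (Finset.mem_univ j)).symm
  have hne (t : ι → ℝ) : ∑ i ∈ Finset.univ.erase j, update g j f i (t i) =
      ∑ i ∈ Finset.univ.erase j, g i (t i) :=
    Finset.sum_congr rfl fun i hi ↦ by rw [update_of_ne (Finset.ne_of_mem_erase hi)]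
  simp only [hsum, hne, update_self]
  refine lintegral_abs_add_le_of_odd (measurePreserving_pi_update_neg j hσ) (by fun_prop)
    (by fun_prop) (by fun_prop) (fun t ↦ ?_) (fun t ↦ ?_) (fun t ↦ ?_) fun t ↦ hfg _
  · exact Finset.sum_congr rfl fun i hi ↦ by rw [update_of_ne (Finset.ne_of_mem_erase hi)]
  · rw [update_self, hfodd]
  · rw [update_self, hgodd]

lemma lintegral_pi_abs_sum_odd_mono (hσ : ∀ i, MeasurePreserving Neg.neg (σ i) (σ i))
    {f g : ι → ℝ → ℝ} (hf : ∀ i, Measurable (f i)) (hg : ∀ i, Measurable (g i))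
    (hfodd : ∀ i s, f i (-s) = -f i s) (hgodd : ∀ i s, g i (-s) = -g i s)
    (hfg : ∀ i s, |f i s| ≤ |g i s|) :
    ∫⁻ t, .ofReal |∑ i, f i (t i)| ∂Measure.pi σ ≤
      ∫⁻ t, .ofReal |∑ i, g i (t i)| ∂Measure.pi σ := by
  classical
  suffices h : ∀ s : Finset ι, ∫⁻ t, .ofReal |∑ i, s.piecewise f g i (t i)| ∂Measure.pi σ ≤
      ∫⁻ t, .ofReal |∑ i, g i (t i)| ∂Measure.pi σ by
    simpa only [Finset.piecewise_univ] using h Finset.univ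
  intro s
  induction s using Finset.induction_on with
  | empty => simp only [Finset.piecewise_empty, le_refl]
  | insert j s hj ih =>
    have hgj : s.piecewise f g j = g j := Finset.piecewise_eq_of_notMem _ _ _ hj
    rw [Finset.piecewise_insert]
    refine (lintegral_pi_abs_sum_update_le j (hσ j) (fun i ↦ ?_) ?_ (hf j) (hfodd j) ?_).trans ih
    · by_cases hi : i ∈ s
      · simpa only [Finset.piecewise_eq_of_mem _ _ _ hi] using hf i
      · simpa only [Finset.piecewise_eq_of_notMem _ _ _ hi] using hg i
    · simpa only [hgj] using hgodd j
    · simpa only [hgj] using hfg j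

lemma measurePreserving_neg_restrict_symmInterval (K : Set ℝ) :
    MeasurePreserving Neg.neg (volume.restrict (symmInterval K))
      (volume.restrict (symmInterval K)) := by
  have h := (Measure.measurePreserving_neg (volume : Measure ℝ)).restrict_preimage
    (measurableSet_symmInterval K)
  rwa [show Neg.neg ⁻¹' symmInterval K = symmInterval K from
    Set.ext fun s ↦ neg_mem_symmInterval] at h

theorem setLIntegral_pi_symmInterval_abs_sum_le {K : ι → Set ℝ} (hK : ∀ i, volume (K i) ≠ ∞)
    (c : ι → ℝ) :
    ∫⁻ t in univ.pi fun i ↦ symmInterval (K i), .ofReal |∑ i, c i * t i| ≤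
      ∫⁻ t in univ.pi K, .ofReal |∑ i, c i * t i| := by
  set σ : ι → Measure ℝ := fun i ↦ volume.restrict (symmInterval (K i))
  set Q : ι → ℝ → ℝ := fun i ↦ centeredQuantile (K i)
  have hσ i : MeasurePreserving Neg.neg (σ i) (σ i) :=
    measurePreserving_neg_restrict_symmInterval (K i)
  have hQm i : Measurable (Q i) := measurable_centeredQuantile (hK i)
  have hpush := measurePreserving_pi σ _ fun i ↦ measurePreserving_centeredQuantile (hK i)
  have hneg := measurePreserving_pi σ σ hσ
  rw [volume_pi, Measure.restrict_pi_pi, Measure.restrict_pi_pi]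
  calc ∫⁻ t, .ofReal |∑ i, c i * t i| ∂Measure.pi σ
      ≤ ∫⁻ t, .ofReal |∑ i, c i * ((Q i (t i) - Q i (-t i)) / 2)| ∂Measure.pi σ := by
        refine lintegral_pi_abs_sum_odd_mono hσ (f := fun i s ↦ c i * s)
          (g := fun i s ↦ c i * ((Q i s - Q i (-s)) / 2)) (fun i ↦ by fun_prop)
          (fun i ↦ by fun_prop) (fun i s ↦ by ring) (fun i s ↦ ?_) fun i s ↦ ?_
        · rw [neg_neg]
          ring
        · rw [abs_mul, abs_mul, abs_div, abs_two]
          have := two_mul_abs_le_centeredQuantile (hK i) s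
          gcongr
          linarith
    _ = ∫⁻ t, .ofReal |(∑ i, c i * Q i (t i) - ∑ i, c i * Q i (-t i)) / 2| ∂Measure.pi σ := by
        simp only [← Finset.sum_sub_distrib, ← mul_sub, Finset.sum_div, mul_div_assoc]
    _ ≤ ∫⁻ t, .ofReal |∑ i, c i * Q i (t i)| ∂Measure.pi σ :=
        lintegral_abs_half_sub_comp_le hneg (h := fun t ↦ ∑ i, c i * Q i (t i)) (by fun_prop)
    _ = ∫⁻ t, .ofReal |∑ i, c i * t i| ∂Measure.pi fun i ↦ volume.restrict (K i) :=
        hpush.lintegral_comp (f := fun t ↦ .ofReal |∑ i, c i * t i|) (by fun_prop)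

end OddReplacement

section Steiner

variable {m : ℕ}

lemma measurePreserving_cons (m : ℕ) :
    MeasurePreserving (fun p : (Fin m → ℝ) × ℝ ↦ (Fin.cons p.2 p.1 : Fin (m + 1) → ℝ)) := by
  have h := ((volume_preserving_piFinSuccAbove (fun _ : Fin (m + 1) ↦ ℝ) 0).symm).comp
    (Measure.measurePreserving_swap (μ := (volume : Measure (Fin m → ℝ)))
      (ν := (volume : Measure ℝ)))
  rw [MeasurableEquiv.piFinSuccAbove_symm_apply, Fin.insertNthEquiv_zero] at h
  exact h

lemma measurePreserving_cons_pi (m : ℕ) (ι : Type*) [Fintype ι] :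
    MeasurePreserving (fun p : (ι → Fin m → ℝ) × (ι → ℝ) ↦
      fun i ↦ (Fin.cons (p.2 i) (p.1 i) : Fin (m + 1) → ℝ)) :=
  (volume_preserving_pi fun _ : ι ↦ measurePreserving_cons m).comp
    (volume_measurePreserving_arrowProdEquivProdArrow (Fin m → ℝ) ℝ ι).symm

/-- The one-dimensional fibre of `K` over `y`, in the direction of the zeroth coordinate. -/
def axisFiber (K : Set (Fin (m + 1) → ℝ)) (y : Fin m → ℝ) : Set ℝ :=
  {t | (Fin.cons t y : Fin (m + 1) → ℝ) ∈ K}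

/-- The integral of `|det (x₁, …, x_m)|` over `m`-tuples of points of `K ⊆ ℝ^m`; it is `m!` times
the mean volume of a simplex with one vertex at the origin and the others in `K`, before
normalization by `|K|^m`. -/
def detMoment (K : Set (Fin m → ℝ)) : ℝ≥0∞ :=
  ∫⁻ x in univ.pi fun _ : Fin m ↦ K, .ofReal |(Matrix.of x).det|

/-- The Steiner symmetral of `K` in the direction of the zeroth coordinate. Fibres of infinite
length are replaced by `∅`, because `volume.real` vanishes on them. -/
def steinerSymm (K : Set (Fin (m + 1) → ℝ)) : Set (Fin (m + 1) → ℝ) :=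
  {x | |x 0| < volume.real (axisFiber K (Fin.tail x)) / 2}

lemma measurable_ofReal_abs_det (m : ℕ) :
    Measurable fun x : Fin m → Fin m → ℝ ↦ ENNReal.ofReal |(Matrix.of x).det| := by
  have hcont : Continuous fun x : Fin m → Fin m → ℝ ↦ (Matrix.of x).det :=
    Continuous.matrix_det continuous_id
  exact hcont.abs.measurable.ennreal_ofReal

variable {K : Set (Fin (m + 1) → ℝ)}

lemma measurableSet_axisFiber (hK : MeasurableSet K) (y : Fin m → ℝ) :
    MeasurableSet (axisFiber K y) :=
  ((measurePreserving_cons m).measurable.comp measurable_prodMk_left) hK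

lemma measurable_volume_axisFiber (hK : MeasurableSet K) :
    Measurable fun y ↦ volume (axisFiber K y) :=
  measurable_measure_prodMk_left ((measurePreserving_cons m).measurable hK)

lemma volume_eq_lintegral_axisFiber (hK : MeasurableSet K) :
    volume K = ∫⁻ y, volume (axisFiber K y) := by
  rw [← (measurePreserving_cons m).measure_preimage hK.nullMeasurableSet]
  exact Measure.prod_apply ((measurePreserving_cons m).measurable hK)

lemma axisFiber_steinerSymm (K : Set (Fin (m + 1) → ℝ)) (y : Fin m → ℝ) :
    axisFiber (steinerSymm K) y = symmInterval (axisFiber K y) :=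
  Set.ext fun _ ↦ by
    simp only [axisFiber, steinerSymm, symmInterval, mem_ofPred_eq, Fin.cons_zero, Fin.tail_cons,
      mem_Ioo, abs_lt]

lemma measurableSet_steinerSymm (hK : MeasurableSet K) : MeasurableSet (steinerSymm K) := by
  have htail : Measurable (Fin.tail : (Fin (m + 1) → ℝ) → Fin m → ℝ) :=
    measurable_pi_lambda _ fun _ ↦ measurable_pi_apply _
  exact measurableSet_lt (by fun_prop)
    (((measurable_volume_axisFiber hK).comp htail).ennreal_toReal.div_const 2)

lemma volume_symmInterval {K : Set ℝ} (hK : volume K ≠ ∞) :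
    volume (symmInterval K) = volume K := by
  rw [symmInterval, Real.volume_Ioo, sub_neg_eq_add, add_halves, ofReal_measureReal hK]

lemma volume_steinerSymm (hK : MeasurableSet K) (hfin : volume K ≠ ∞) :
    volume (steinerSymm K) = volume K := by
  rw [volume_eq_lintegral_axisFiber hK] at hfin
  rw [volume_eq_lintegral_axisFiber hK,
    volume_eq_lintegral_axisFiber (measurableSet_steinerSymm hK)]
  refine lintegral_congr_ae ?_
  filter_upwards [ae_lt_top (measurable_volume_axisFiber hK) hfin] with y hy
  rw [axisFiber_steinerSymm, volume_symmInterval hy.ne]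

lemma det_of_cons (t : Fin (m + 1) → ℝ) (y : Fin (m + 1) → Fin m → ℝ) :
    (Matrix.of fun i ↦ (Fin.cons (t i) (y i) : Fin (m + 1) → ℝ)).det =
      ∑ i : Fin (m + 1), (-1) ^ (i : ℕ) * (Matrix.of fun j ↦ y (i.succAbove j)).det * t i := by
  rw [Matrix.det_succ_column_zero]
  exact Finset.sum_congr rfl fun i _ ↦ mul_right_comm _ _ _

lemma detMoment_eq_lintegral_axisFiber (hK : MeasurableSet K) :
    detMoment K = ∫⁻ y : Fin (m + 1) → Fin m → ℝ,
      ∫⁻ t in univ.pi fun i ↦ axisFiber K (y i),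
        .ofReal |∑ i : Fin (m + 1), (-1) ^ (i : ℕ) *
          (Matrix.of fun j ↦ y (i.succAbove j)).det * t i| := by
  have hpi : MeasurableSet (univ.pi fun _ : Fin (m + 1) ↦ K) := .univ_pi fun _ ↦ hK
  have hm := (measurable_ofReal_abs_det (m + 1)).indicator hpi
  rw [detMoment, ← lintegral_indicator hpi,
    ← (measurePreserving_cons_pi m (Fin (m + 1))).lintegral_comp hm,
    Measure.volume_eq_prod]
  refine (lintegral_prod _ (hm.comp (measurePreserving_cons_pi m _).measurable).aemeasurable).trans
    ?_
  refine lintegral_congr fun y ↦ ?_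
  rw [← lintegral_indicator (.univ_pi fun i ↦ measurableSet_axisFiber hK (y i))]
  refine lintegral_congr fun t ↦ ?_
  simp only [comp_apply, indicator, mem_univ_pi, det_of_cons]
  rfl

theorem detMoment_steinerSymm_le (hK : MeasurableSet K) :
    detMoment (steinerSymm K) ≤ detMoment K := by
  rw [detMoment_eq_lintegral_axisFiber hK,
    detMoment_eq_lintegral_axisFiber (measurableSet_steinerSymm hK)]
  refine lintegral_mono fun y ↦ ?_
  simp only [axisFiber_steinerSymm]
  by_cases hfin : ∀ i, volume (axisFiber K (y i)) ≠ ∞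
  · exact setLIntegral_pi_symmInterval_abs_sum_le hfin _
  · push Not at hfin
    obtain ⟨i, hi⟩ := hfin
    have hempty : symmInterval (axisFiber K (y i)) = ∅ := by
      simp [symmInterval, measureReal_def, hi]
    rw [univ_pi_eq_empty (i := i) hempty, setLIntegral_empty]
    exact zero_le

end Steiner

section SteinerBall

variable {m : ℕ}

lemma volume_symmInterval_inter_le {F G : Set ℝ} (hF : MeasurableSet F) (hG : MeasurableSet G)
    (hFfin : volume F ≠ ∞) (hGfin : volume G ≠ ∞) (hGsymm : symmInterval G ⊆ G) (d : ℝ) :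
    volume (F ∩ G) + volume ((G \ F) ∩ (· + d) ⁻¹' (F \ G)) ≤ volume (symmInterval F ∩ G) := by
  rcases le_total (volume.real F) (volume.real G) with h | h
  · have hsub : symmInterval F ⊆ symmInterval F ∩ G := subset_inter subset_rfl
      (subset_trans (Ioo_subset_Ioo (by linarith) (by linarith)) hGsymm)
    refine le_trans ?_ (measure_mono hsub)
    rw [volume_symmInterval hFfin, ← measure_inter_add_sdiff F hG]
    exact add_le_add le_rfl
      ((measure_mono inter_subset_right).trans_eq (measure_preimage_add_right volume d _))
  · have hsub : symmInterval G ⊆ symmInterval F ∩ G := subset_inter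
      (Ioo_subset_Ioo (by linarith) (by linarith)) hGsymm
    refine le_trans ?_ (measure_mono hsub)
    rw [volume_symmInterval hGfin, ← measure_inter_add_sdiff G hF, inter_comm]
    gcongr
    exact inter_subset_left

lemma volume_inter_add_le_steinerSymm_inter {K B : Set (Fin (m + 1) → ℝ)} (hK : MeasurableSet K)
    (hB : MeasurableSet B) (hKfin : volume K ≠ ∞) (hBfin : volume B ≠ ∞)
    (hBsymm : steinerSymm B ⊆ B) (d : ℝ) :
    volume (K ∩ B) + volume ((B \ K) ∩ (· + Pi.single 0 d) ⁻¹' (K \ B)) ≤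
      volume (steinerSymm K ∩ B) := by
  have hM : MeasurableSet ((B \ K) ∩ (· + Pi.single 0 d) ⁻¹' (K \ B)) :=
    (hB.diff hK).inter (measurable_add_const _ (hK.diff hB))
  rw [volume_eq_lintegral_axisFiber hK] at hKfin
  rw [volume_eq_lintegral_axisFiber hB] at hBfin
  rw [volume_eq_lintegral_axisFiber (hK.inter hB), volume_eq_lintegral_axisFiber hM,
    volume_eq_lintegral_axisFiber ((measurableSet_steinerSymm hK).inter hB),
    ← lintegral_add_left (measurable_volume_axisFiber (hK.inter hB))]
  refine lintegral_mono_ae ?_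
  filter_upwards [ae_lt_top (measurable_volume_axisFiber hK) hKfin,
    ae_lt_top (measurable_volume_axisFiber hB) hBfin] with y hyK hyB
  have hshift : axisFiber ((B \ K) ∩ (· + Pi.single 0 d) ⁻¹' (K \ B)) y =
      (axisFiber B y \ axisFiber K y) ∩ (· + d) ⁻¹' (axisFiber K y \ axisFiber B y) := by
    have hcons (t : ℝ) : (Fin.cons t y + Pi.single 0 d : Fin (m + 1) → ℝ) = Fin.cons (t + d) y := by
      ext i
      refine Fin.cases ?_ (fun j ↦ ?_) i <;> simp
    ext t
    simp only [axisFiber, mem_inter_iff, Set.mem_sdiff, mem_preimage, mem_ofPred_eq, hcons]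
  have hsymm : symmInterval (axisFiber B y) ⊆ axisFiber B y := by
    rw [← axisFiber_steinerSymm]
    exact fun t ht ↦ hBsymm ht
  rw [hshift]
  exact (volume_symmInterval_inter_le (measurableSet_axisFiber hK y)
    (measurableSet_axisFiber hB y) hyK.ne hyB.ne hsymm d).trans_eq
      (by rw [← axisFiber_steinerSymm]; rfl)

lemma steinerSymm_mono {K B : Set (Fin (m + 1) → ℝ)} (h : K ⊆ B)
    (hB : ∀ y, volume (axisFiber B y) ≠ ∞) : steinerSymm K ⊆ steinerSymm B := fun x hx ↦
  lt_of_lt_of_le (b := volume.real (axisFiber K (Fin.tail x)) / 2) hx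
    (div_le_div_of_nonneg_right (measureReal_mono (fun _ ht ↦ h ht) (hB _)) zero_le_two)

/-- The Euclidean ball of radius `|r|` centred at the origin, as a subset of `Fin m → ℝ`, on which
the norm is the sup norm. -/
def euclideanBall (m : ℕ) (r : ℝ) : Set (Fin m → ℝ) :=
  {x | ∑ i, x i ^ 2 ≤ r ^ 2}

lemma measurableSet_euclideanBall (m : ℕ) (r : ℝ) : MeasurableSet (euclideanBall m r) :=
  measurableSet_le (by fun_prop) (by fun_prop)

lemma euclideanBall_subset_Icc (m : ℕ) (r : ℝ) :
    euclideanBall m r ⊆ Icc (fun _ ↦ -|r|) fun _ ↦ |r| := fun x hx ↦ by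
  have hle (i : Fin m) : |x i| ≤ |r| := sq_le_sq.1 <|
    (Finset.single_le_sum (fun j _ ↦ sq_nonneg (x j)) (Finset.mem_univ i)).trans hx
  exact ⟨fun i ↦ neg_le_of_abs_le (hle i), fun i ↦ le_of_abs_le (hle i)⟩

lemma volume_euclideanBall_ne_top (m : ℕ) (r : ℝ) : volume (euclideanBall m r) ≠ ∞ :=
  measure_ne_top_of_subset (euclideanBall_subset_Icc m r) isCompact_Icc.measure_lt_top.ne

lemma axisFiber_euclideanBall (r : ℝ) (y : Fin m → ℝ) :
    axisFiber (euclideanBall (m + 1) r) y = {t | t ^ 2 ≤ r ^ 2 - ∑ i, y i ^ 2} := by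
  ext t
  simp only [axisFiber, euclideanBall, mem_ofPred_eq, Fin.sum_univ_succ, Fin.cons_zero,
    Fin.cons_succ, le_sub_iff_add_le]

lemma setOf_sq_le_eq_Icc {c : ℝ} (hc : 0 ≤ c) : {t : ℝ | t ^ 2 ≤ c} = Icc (-√c) √c :=
  Set.ext fun _ ↦ Real.sq_le hc

lemma setOf_sq_le_eq_empty {c : ℝ} (hc : c < 0) : {t : ℝ | t ^ 2 ≤ c} = ∅ :=
  eq_empty_of_forall_notMem fun t ht ↦ (hc.trans_le (sq_nonneg t)).not_ge ht

lemma symmInterval_setOf_sq_le_subset (c : ℝ) :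
    symmInterval {t : ℝ | t ^ 2 ≤ c} ⊆ {t | t ^ 2 ≤ c} := by
  rcases lt_or_ge c 0 with hc | hc
  · simp [setOf_sq_le_eq_empty hc, symmInterval]
  · have hvol : volume.real (Icc (-√c) √c) / 2 = √c := by
      rw [Real.volume_real_Icc_of_le (neg_le_self (Real.sqrt_nonneg c))]
      ring
    rw [setOf_sq_le_eq_Icc hc, symmInterval, hvol]
    exact Ioo_subset_Icc_self

lemma volume_axisFiber_euclideanBall_ne_top (r : ℝ) (y : Fin m → ℝ) :
    volume (axisFiber (euclideanBall (m + 1) r) y) ≠ ∞ := by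
  rw [axisFiber_euclideanBall]
  rcases lt_or_ge (r ^ 2 - ∑ i, y i ^ 2) 0 with hc | hc
  · simp [setOf_sq_le_eq_empty hc]
  · simp [setOf_sq_le_eq_Icc hc]

lemma steinerSymm_euclideanBall_subset (r : ℝ) :
    steinerSymm (euclideanBall (m + 1) r) ⊆ euclideanBall (m + 1) r := fun x hx ↦ by
  rw [← Fin.cons_self_tail x] at hx ⊢
  have hfib : axisFiber (steinerSymm (euclideanBall (m + 1) r)) (Fin.tail x) ⊆
      axisFiber (euclideanBall (m + 1) r) (Fin.tail x) := by
    rw [axisFiber_steinerSymm, axisFiber_euclideanBall]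
    exact symmInterval_setOf_sq_le_subset _
  exact hfib hx

lemma steinerSymm_subset_euclideanBall {K : Set (Fin (m + 1) → ℝ)} {r : ℝ}
    (hK : K ⊆ euclideanBall (m + 1) r) : steinerSymm K ⊆ euclideanBall (m + 1) r :=
  (steinerSymm_mono hK (volume_axisFiber_euclideanBall_ne_top r)).trans
    (steinerSymm_euclideanBall_subset r)

end SteinerBall

section Linear

lemma lintegral_comp_linearMap {E : Type*} [NormedAddCommGroup E] [NormedSpace ℝ E]
    [FiniteDimensional ℝ E] [MeasurableSpace E] [BorelSpace E] (μ : Measure E) [μ.IsAddHaarMeasure]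
    {f : E →ₗ[ℝ] E} (hf : LinearMap.det f ≠ 0) {g : E → ℝ≥0∞} (hg : Measurable g) :
    .ofReal |LinearMap.det f| * ∫⁻ x, g (f x) ∂μ = ∫⁻ x, g x ∂μ := by
  rw [← lintegral_map hg f.continuous_of_finiteDimensional.measurable,
    Measure.map_linearMap_addHaar_eq_smul_addHaar μ hf, lintegral_smul_measure, smul_eq_mul,
    ← mul_assoc, ← ENNReal.ofReal_mul (abs_nonneg _), ← abs_mul, mul_inv_cancel₀ hf, abs_one,
    ENNReal.ofReal_one, one_mul]

variable {m : ℕ}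

lemma det_of_linearMap_comp (f : (Fin m → ℝ) →ₗ[ℝ] Fin m → ℝ) (x : Fin m → Fin m → ℝ) :
    (Matrix.of fun i ↦ f (x i)).det = LinearMap.det f * (Matrix.of x).det := by
  have h := (Pi.basisFun ℝ (Fin m)).det_comp f x
  rwa [Pi.basisFun_det] at h

lemma detMoment_preimage_linearMap {f : (Fin m → ℝ) →ₗ[ℝ] Fin m → ℝ} (hf : LinearMap.det f ≠ 0)
    {K : Set (Fin m → ℝ)} (hK : MeasurableSet K) :
    .ofReal |LinearMap.det f| ^ (m + 1) * detMoment (f ⁻¹' K) = detMoment K := by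
  set F : (Fin m → Fin m → ℝ) →ₗ[ℝ] Fin m → Fin m → ℝ :=
    LinearMap.pi fun i ↦ f ∘ₗ LinearMap.proj i with hF
  have hdetF : LinearMap.det F = LinearMap.det f ^ m := by
    rw [hF, LinearMap.det_pi, Finset.prod_const, Finset.card_univ, Fintype.card_fin]
  have hfK : MeasurableSet (f ⁻¹' K) := f.continuous_of_finiteDimensional.measurable hK
  have hpi : MeasurableSet (univ.pi fun _ : Fin m ↦ K) := .univ_pi fun _ ↦ hK
  have hpi' : MeasurableSet (univ.pi fun _ : Fin m ↦ f ⁻¹' K) := .univ_pi fun _ ↦ hfK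
  have hdet := measurable_ofReal_abs_det m
  rw [detMoment, detMoment, ← lintegral_indicator hpi, ← lintegral_indicator hpi',
    ← lintegral_comp_linearMap volume (hdetF ▸ pow_ne_zero m hf) (hdet.indicator hpi), hdetF,
    abs_pow, ENNReal.ofReal_pow (abs_nonneg _), pow_succ, mul_assoc,
    ← lintegral_const_mul _ (hdet.indicator hpi')]
  congr 1
  refine lintegral_congr fun x ↦ ?_
  have hmem : F x ∈ univ.pi (fun _ ↦ K) ↔ x ∈ univ.pi fun _ : Fin m ↦ f ⁻¹' K := by
    simp only [mem_univ_pi, hF, LinearMap.pi_apply, LinearMap.comp_apply, LinearMap.proj_apply,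
      mem_preimage]
  have hval : ENNReal.ofReal |(Matrix.of (F x)).det| =
      .ofReal |LinearMap.det f| * .ofReal |(Matrix.of x).det| := by
    rw [← ENNReal.ofReal_mul (abs_nonneg _), ← abs_mul, ← det_of_linearMap_comp]
    rfl
  by_cases hx : x ∈ univ.pi fun _ : Fin m ↦ f ⁻¹' K
  · rw [indicator_of_mem hx, indicator_of_mem (hmem.2 hx), hval]
  · rw [indicator_of_notMem hx, indicator_of_notMem (mt hmem.1 hx), mul_zero]

lemma exists_linearMap_isometry_single_eq (d : Fin (m + 1) → ℝ) :
    ∃ (f : (Fin (m + 1) → ℝ) →ₗ[ℝ] Fin (m + 1) → ℝ) (ρ : ℝ), |LinearMap.det f| = 1 ∧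
      (∀ x, ∑ i, f x i ^ 2 = ∑ i, x i ^ 2) ∧ f (Pi.single 0 ρ) = d := by
  set D : EuclideanSpace ℝ (Fin (m + 1)) := WithLp.toLp 2 d
  set v : EuclideanSpace ℝ (Fin (m + 1)) := EuclideanSpace.single 0 ‖D‖ with hv
  set P := (ℝ ∙ (v - D))ᗮ.reflection
  have hPv : P v = D := Submodule.reflection_sub (by simp [hv])
  set e := WithLp.linearEquiv 2 ℝ (Fin (m + 1) → ℝ)
  refine ⟨e.conj P.toLinearEquiv, ‖D‖, ?_, fun x ↦ ?_, congrArg e hPv⟩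
  · rw [LinearEquiv.conj_apply, LinearMap.comp_assoc, LinearMap.det_conj]
    exact (congrArg abs (Submodule.det_reflection _)).trans (by simp)
  · have h := P.norm_map (WithLp.toLp 2 x)
    rw [← sq_eq_sq₀ (norm_nonneg _) (norm_nonneg _), EuclideanSpace.norm_sq_eq,
      EuclideanSpace.norm_sq_eq] at h
    simp only [Real.norm_eq_abs, sq_abs] at h
    exact h

end Linear

section Translate

variable {G : Type*} [AddGroup G] [MeasurableSpace G] [MeasurableAdd₂ G] {μ : Measure G}
  [SFinite μ] [μ.IsAddLeftInvariant] {A C W : Set G}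

lemma lintegral_measure_inter_preimage_add_right (hA : MeasurableSet A) (hC : MeasurableSet C) :
    ∫⁻ d, μ (A ∩ (· + d) ⁻¹' C) ∂μ = μ A * μ C := by
  have hshear := measurePreserving_prod_add μ μ
  rw [← Measure.prod_prod, ← hshear.measure_preimage (hA.prod hC).nullMeasurableSet,
    Measure.prod_apply_symm (hshear.measurable (hA.prod hC))]
  rfl

lemma exists_mul_le_measure_inter_preimage_add_right (hA : MeasurableSet A) (hC : MeasurableSet C)
    (hW : MeasurableSet W) (hAfin : μ A ≠ ∞) (hCfin : μ C ≠ ∞) (hW0 : μ W ≠ 0) (hWfin : μ W ≠ ∞)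
    (hACW : ∀ x ∈ A, ∀ y ∈ C, -x + y ∈ W) :
    ∃ d, μ A * μ C ≤ μ W * μ (A ∩ (· + d) ⁻¹' C) := by
  have hsupp : (support fun d ↦ μ (A ∩ (· + d) ⁻¹' C)) ⊆ W := fun d hd ↦ by
    obtain ⟨x, hxA, hxC⟩ := nonempty_of_measure_ne_zero hd
    simpa only [neg_add_cancel_left] using hACW x hxA (x + d) hxC
  have hint : ∫⁻ d in W, μ (A ∩ (· + d) ⁻¹' C) ∂μ = μ A * μ C :=
    (setLIntegral_eq_of_support_subset hsupp).trans
      (lintegral_measure_inter_preimage_add_right hA hC)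
  obtain ⟨d, -, hd⟩ := exists_setLAverage_le hW0 hW.nullMeasurableSet
    (hint.trans_ne (ENNReal.mul_ne_top hAfin hCfin))
  rw [setLAverage_eq, hint, ENNReal.div_le_iff hW0 hWfin, mul_comm (μ (A ∩ _))] at hd
  exact ⟨d, hd⟩

end Translate

lemma exists_lt_of_forall_exists_le_sub_mul_sq {S : Set ℝ} (hne : S.Nonempty)
    (hnonneg : ∀ x ∈ S, 0 ≤ x) {c : ℝ} (hc : 0 < c)
    (hstep : ∀ x ∈ S, ∃ y ∈ S, y ≤ x - c * x ^ 2) {ε : ℝ} (hε : 0 < ε) : ∃ y ∈ S, y < ε := by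
  have hbdd : BddBelow S := ⟨0, hnonneg⟩
  refine exists_lt_of_csInf_lt hne (lt_of_le_of_lt (le_of_not_gt fun hpos ↦ ?_) hε)
  obtain ⟨x, hxS, hx⟩ := exists_lt_of_csInf_lt hne
    (lt_add_of_pos_right (sInf S) (mul_pos hc (pow_pos hpos 2)))
  obtain ⟨y, hyS, hy⟩ := hstep x hxS
  have hyinf : sInf S ≤ y := csInf_le hbdd hyS
  have hxinf : c * sInf S ^ 2 ≤ c * x ^ 2 := by
    gcongr
    exact csInf_le hbdd hxS
  linarith

section Competitor

variable {m : ℕ}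

/-- `K'` is an admissible competitor of `K` in minimizing the determinant moment: it lies in the
ball of radius `|R|`, has the volume of `K`, and its determinant moment is not larger. -/
structure IsCompetitor (R : ℝ) (K K' : Set (Fin m → ℝ)) : Prop where
  measurableSet : MeasurableSet K'
  subset : K' ⊆ euclideanBall m R
  volume_eq : volume K' = volume K
  detMoment_le : detMoment K' ≤ detMoment K

lemma IsCompetitor.trans {R : ℝ} {K K' K'' : Set (Fin m → ℝ)} (h : IsCompetitor R K K')
    (h' : IsCompetitor R K' K'') : IsCompetitor R K K'' where
  measurableSet := h'.measurableSet
  subset := h'.subset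
  volume_eq := h'.volume_eq.trans h.volume_eq
  detMoment_le := h'.detMoment_le.trans h.detMoment_le

variable {R : ℝ} {K : Set (Fin (m + 1) → ℝ)}

lemma isCompetitor_steinerSymm (hK : MeasurableSet K) (hKR : K ⊆ euclideanBall (m + 1) R) :
    IsCompetitor R K (steinerSymm K) where
  measurableSet := measurableSet_steinerSymm hK
  subset := steinerSymm_subset_euclideanBall hKR
  volume_eq := volume_steinerSymm hK
    (measure_ne_top_of_subset hKR (volume_euclideanBall_ne_top _ R))
  detMoment_le := detMoment_steinerSymm_le hK

lemma preimage_euclideanBall {f : (Fin m → ℝ) →ₗ[ℝ] Fin m → ℝ}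
    (hf : ∀ x, ∑ i, f x i ^ 2 = ∑ i, x i ^ 2) (r : ℝ) :
    f ⁻¹' euclideanBall m r = euclideanBall m r :=
  Set.ext fun x ↦ by simp only [euclideanBall, mem_preimage, mem_ofPred_eq, hf]

lemma volume_preimage_of_abs_det_eq_one {f : (Fin m → ℝ) →ₗ[ℝ] Fin m → ℝ}
    (hf : |LinearMap.det f| = 1) (S : Set (Fin m → ℝ)) : volume (f ⁻¹' S) = volume S := by
  rw [Measure.addHaar_preimage_linearMap volume (abs_pos.1 (hf ▸ one_pos)), abs_inv, hf, inv_one,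
    ENNReal.ofReal_one, one_mul]

lemma isCompetitor_preimage {K : Set (Fin m → ℝ)} {f : (Fin m → ℝ) →ₗ[ℝ] Fin m → ℝ}
    (hf : |LinearMap.det f| = 1) (hsq : ∀ x, ∑ i, f x i ^ 2 = ∑ i, x i ^ 2)
    (hK : MeasurableSet K) (hKR : K ⊆ euclideanBall m R) : IsCompetitor R K (f ⁻¹' K) where
  measurableSet := f.continuous_of_finiteDimensional.measurable hK
  subset := preimage_euclideanBall hsq R ▸ preimage_mono hKR
  volume_eq := volume_preimage_of_abs_det_eq_one hf K
  detMoment_le := by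
    rw [← detMoment_preimage_linearMap (abs_pos.1 (hf ▸ one_pos)) hK, hf, ENNReal.ofReal_one,
      one_pow, one_mul]

lemma exists_isCompetitor_translate_le (hK : MeasurableSet K) (hKR : K ⊆ euclideanBall (m + 1) R)
    (r : ℝ) (d : Fin (m + 1) → ℝ) :
    ∃ K', IsCompetitor R K K' ∧ volume (K ∩ euclideanBall (m + 1) r) +
      volume ((euclideanBall (m + 1) r \ K) ∩ (· + d) ⁻¹' (K \ euclideanBall (m + 1) r)) ≤
        volume (K' ∩ euclideanBall (m + 1) r) := by
  obtain ⟨f, ρ, hdet, hsq, hfd⟩ := exists_linearMap_isometry_single_eq d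
  have hcomp := isCompetitor_preimage hdet hsq hK hKR
  refine ⟨steinerSymm (f ⁻¹' K),
    hcomp.trans (isCompetitor_steinerSymm hcomp.measurableSet hcomp.subset), ?_⟩
  have hgain := volume_inter_add_le_steinerSymm_inter hcomp.measurableSet
    (measurableSet_euclideanBall _ r)
    (measure_ne_top_of_subset hcomp.subset (volume_euclideanBall_ne_top _ R))
    (volume_euclideanBall_ne_top _ r) (steinerSymm_euclideanBall_subset r) ρ
  set B := euclideanBall (m + 1) r
  have hB : f ⁻¹' B = B := preimage_euclideanBall hsq r
  have hshift : (· + Pi.single 0 ρ) ⁻¹' (f ⁻¹' (K \ B)) = f ⁻¹' ((· + d) ⁻¹' (K \ B)) :=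
    Set.ext fun x ↦ by simp only [mem_preimage, map_add, hfd]
  nth_rw 1 2 3 [← hB] at hgain
  rwa [← preimage_inter, ← preimage_sdiff, ← preimage_sdiff, hshift, ← preimage_inter,
    volume_preimage_of_abs_det_eq_one hdet, volume_preimage_of_abs_det_eq_one hdet] at hgain

lemma volume_real_Icc_neg_const {a : ℝ} (ha : 0 ≤ a) :
    volume.real (Icc (fun _ ↦ -a) fun _ ↦ a : Set (Fin m → ℝ)) = (2 * a) ^ m := by
  rw [measureReal_def, Real.volume_Icc_pi_toReal fun _ ↦ neg_le_self ha, Finset.prod_const,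
    Finset.card_univ, Fintype.card_fin, sub_neg_eq_add, two_mul]

lemma neg_add_mem_Icc_of_mem_euclideanBall {r : ℝ} {x y : Fin m → ℝ}
    (hx : x ∈ euclideanBall m r) (hy : y ∈ euclideanBall m R) :
    -x + y ∈ Icc (fun _ ↦ -(|R| + |r|)) fun _ ↦ |R| + |r| := by
  have hx' := euclideanBall_subset_Icc m r hx
  have hy' := euclideanBall_subset_Icc m R hy
  refine ⟨fun i ↦ ?_, fun i ↦ ?_⟩
  · linarith [hx'.2 i, hy'.1 i, Pi.add_apply (-x) y i, Pi.neg_apply x i]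
  · linarith [hx'.1 i, hy'.2 i, Pi.add_apply (-x) y i, Pi.neg_apply x i]

lemma exists_isCompetitor_mul_le (hK : MeasurableSet K) (hKR : K ⊆ euclideanBall (m + 1) R) {r : ℝ}
    (hr : r ≠ 0) :
    ∃ K', IsCompetitor R K K' ∧
      volume.real (euclideanBall (m + 1) r \ K) * volume.real (K \ euclideanBall (m + 1) r) ≤
        (2 * (|R| + |r|)) ^ (m + 1) * (volume.real (K' ∩ euclideanBall (m + 1) r) -
          volume.real (K ∩ euclideanBall (m + 1) r)) := by
  have hB := measurableSet_euclideanBall (m + 1) r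
  have hBfin := volume_euclideanBall_ne_top (m + 1) r
  have hKfin := measure_ne_top_of_subset hKR (volume_euclideanBall_ne_top _ R)
  have hpos : 0 < |R| + |r| := add_pos_of_nonneg_of_pos (abs_nonneg R) (abs_pos.2 hr)
  have hWreal := volume_real_Icc_neg_const (m := m + 1) hpos.le
  set B := euclideanBall (m + 1) r
  set W : Set (Fin (m + 1) → ℝ) := Icc (fun _ ↦ -(|R| + |r|)) fun _ ↦ |R| + |r|
  have hWfin : volume W ≠ ∞ := isCompact_Icc.measure_lt_top.ne
  have hW0 : volume W ≠ 0 := (measureReal_ne_zero_iff hWfin).1 (hWreal ▸ by positivity)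
  obtain ⟨d, hd⟩ := exists_mul_le_measure_inter_preimage_add_right (hB.diff hK) (hK.diff hB)
    measurableSet_Icc (measure_ne_top_of_subset sdiff_subset hBfin)
    (measure_ne_top_of_subset sdiff_subset hKfin) hW0 hWfin
    fun x hx y hy ↦ neg_add_mem_Icc_of_mem_euclideanBall hx.1 (hKR hy.1)
  obtain ⟨K', hK', hgain⟩ := exists_isCompetitor_translate_le hK hKR r d
  have hgfin : volume ((B \ K) ∩ (· + d) ⁻¹' (K \ B)) ≠ ∞ :=
    measure_ne_top_of_subset (inter_subset_left.trans sdiff_subset) hBfin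
  have hdreal := ENNReal.toReal_mono (ENNReal.mul_ne_top hWfin hgfin) hd
  have hgainreal := ENNReal.toReal_mono (measure_ne_top_of_subset inter_subset_right hBfin) hgain
  rw [ENNReal.toReal_add (measure_ne_top_of_subset inter_subset_right hBfin) hgfin] at hgainreal
  rw [ENNReal.toReal_mul, ENNReal.toReal_mul] at hdreal
  refine ⟨K', hK', hdreal.trans ?_⟩
  rw [← hWreal]
  exact mul_le_mul_of_nonneg_left (le_sub_iff_add_le'.2 hgainreal) measureReal_nonneg

lemma exists_isCompetitor_real_sdiff_lt (hK : MeasurableSet K)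
    (hKR : K ⊆ euclideanBall (m + 1) R) {r : ℝ} (hr : r ≠ 0)
    (hvol : volume K = volume (euclideanBall (m + 1) r)) {ε : ℝ} (hε : 0 < ε) :
    ∃ K', IsCompetitor R K K' ∧ volume.real (euclideanBall (m + 1) r \ K') < ε := by
  have hB := measurableSet_euclideanBall (m + 1) r
  have hBfin := volume_euclideanBall_ne_top (m + 1) r
  set B := euclideanBall (m + 1) r with hBdef
  have hsplit {C : Set (Fin (m + 1) → ℝ)} (hC : IsCompetitor R K C) :
      volume.real (C ∩ B) + volume.real (B \ C) = volume.real B := by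
    rw [inter_comm, measureReal_inter_add_sdiff hC.measurableSet hBfin]
  have : 0 < |R| + |r| := add_pos_of_nonneg_of_pos (abs_nonneg R) (abs_pos.2 hr)
  have hV : 0 < (2 * (|R| + |r|)) ^ (m + 1) := by positivity
  set S : Set ℝ := (fun C ↦ volume.real (B \ C)) '' {C | IsCompetitor R K C}
  have hne : S.Nonempty := ⟨_, K, ⟨hK, hKR, rfl, le_rfl⟩, rfl⟩
  have hnonneg : ∀ x ∈ S, 0 ≤ x := by
    rintro - ⟨C, -, rfl⟩
    exact measureReal_nonneg
  have hstep : ∀ x ∈ S, ∃ y ∈ S, y ≤ x - ((2 * (|R| + |r|)) ^ (m + 1))⁻¹ * x ^ 2 := by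
    rintro - ⟨C, hC, rfl⟩
    obtain ⟨C', hC', hgain⟩ := exists_isCompetitor_mul_le hC.measurableSet hC.subset hr
    refine ⟨_, ⟨C', hC.trans hC', rfl⟩, ?_⟩
    have hCB : volume.real (C \ B) = volume.real (B \ C) := by
      have hCfin : volume C ≠ ∞ := (hC.volume_eq.trans hvol).trans_ne hBfin
      have hCsplit := measureReal_inter_add_sdiff hB hCfin
      rw [measureReal_def volume C, hC.volume_eq, hvol, ← measureReal_def, ← hsplit hC] at hCsplit
      linarith
    rw [← hBdef, hCB, ← sq, ← inv_mul_le_iff₀ hV] at hgain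
    linarith [hsplit hC, hsplit (hC.trans hC')]
  obtain ⟨-, ⟨K', hK', rfl⟩, hlt⟩ :=
    exists_lt_of_forall_exists_le_sub_mul_sq hne hnonneg (inv_pos.2 hV) hstep hε
  exact ⟨K', hK', hlt⟩

end Competitor

section BallMoment

variable {m : ℕ}

lemma ballVol_pos (m : ℕ) : 0 < ballVol m :=
  div_pos (Real.rpow_pos_of_pos Real.pi_pos _) (Real.Gamma_pos_of_pos (by positivity))

lemma toLp_preimage_closedBall (m : ℕ) :
    WithLp.toLp 2 ⁻¹' closedBall (0 : EuclideanSpace ℝ (Fin m)) 1 = euclideanBall m 1 := by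
  ext x
  rw [mem_preimage, mem_closedBall_zero_iff, ← sq_le_sq₀ (norm_nonneg _) zero_le_one,
    EuclideanSpace.norm_sq_eq]
  simp only [Real.norm_eq_abs, sq_abs, euclideanBall, mem_ofPred_eq]

lemma volume_euclideanBall_one (m : ℕ) : volume (euclideanBall m 1) = .ofReal (ballVol m) := by
  rcases m.eq_zero_or_pos with rfl | hm
  · have hball : euclideanBall 0 1 = univ := eq_univ_of_forall fun x ↦ by simp [euclideanBall]
    simp [hball, ballVol, volume_pi]
  have : Nonempty (Fin m) := ⟨⟨0, hm⟩⟩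
  rw [← toLp_preimage_closedBall, (PiLp.volume_preserving_toLp (Fin m)).measure_preimage
    measurableSet_closedBall.nullMeasurableSet, EuclideanSpace.volume_closedBall,
    ENNReal.ofReal_one, one_pow, one_mul, Fintype.card_fin, ballVol, Real.sqrt_eq_rpow,
    ← Real.rpow_mul_natCast Real.pi_pos.le, one_div_mul_eq_div]

lemma volume_euclideanBall_one_ne_zero (m : ℕ) : volume (euclideanBall m 1) ≠ 0 := by
  rw [volume_euclideanBall_one]
  exact (ENNReal.ofReal_pos.2 (ballVol_pos m)).ne'

lemma euclideanBall_eq_preimage_smul {r : ℝ} (hr : r ≠ 0) :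
    euclideanBall m r = (r⁻¹ • LinearMap.id : (Fin m → ℝ) →ₗ[ℝ] _) ⁻¹' euclideanBall m 1 := by
  ext x
  simp only [euclideanBall, mem_preimage, mem_ofPred_eq, LinearMap.smul_apply, LinearMap.id_apply,
    Pi.smul_apply, smul_eq_mul, mul_pow, ← Finset.mul_sum, inv_pow]
  rw [inv_mul_le_iff₀ (by positivity), one_pow, mul_one]

lemma det_inv_smul_id_ne_zero {r : ℝ} (hr : r ≠ 0) :
    LinearMap.det (r⁻¹ • LinearMap.id : (Fin m → ℝ) →ₗ[ℝ] _) ≠ 0 := by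
  rw [LinearMap.det_smul, LinearMap.det_id, mul_one]
  exact pow_ne_zero _ (inv_ne_zero hr)

lemma volume_euclideanBall {r : ℝ} (hr : r ≠ 0) :
    volume (euclideanBall m r) = .ofReal (|r| ^ m) * volume (euclideanBall m 1) := by
  rw [euclideanBall_eq_preimage_smul hr,
    Measure.addHaar_preimage_linearMap _ (det_inv_smul_id_ne_zero hr), LinearMap.det_smul,
    LinearMap.det_id, mul_one, Module.finrank_fin_fun, abs_inv, abs_pow, abs_inv, inv_pow, inv_inv]

lemma volume_euclideanBall_ne_zero {r : ℝ} (hr : r ≠ 0) : volume (euclideanBall m r) ≠ 0 := by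
  rw [volume_euclideanBall hr]
  exact mul_ne_zero (ENNReal.ofReal_pos.2 (by positivity)).ne' (volume_euclideanBall_one_ne_zero m)

lemma abs_det_le_of_forall_mem_euclideanBall {r : ℝ} {x : Fin m → Fin m → ℝ}
    (hx : ∀ i, x i ∈ euclideanBall m r) : |(Matrix.of x).det| ≤ m.factorial * |r| ^ m := by
  have h := Matrix.det_le (A := Matrix.of x) (abv := AbsoluteValue.abs) (x := |r|) fun i j ↦
    abs_le.2 ⟨(euclideanBall_subset_Icc m r (hx i)).1 j, (euclideanBall_subset_Icc m r (hx i)).2 j⟩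
  rwa [AbsoluteValue.abs_apply, Fintype.card_fin, nsmul_eq_mul] at h

lemma detMoment_mono {K K' : Set (Fin m → ℝ)} (h : K ⊆ K') : detMoment K ≤ detMoment K' :=
  lintegral_mono_set (pi_mono fun _ _ ↦ h)

lemma detMoment_euclideanBall_add_le {K : Set (Fin m → ℝ)} (hK : MeasurableSet K) (r : ℝ) :
    detMoment (euclideanBall m r) +
        .ofReal (m.factorial * |r| ^ m) * volume (K ∩ euclideanBall m r) ^ m ≤
      detMoment K + .ofReal (m.factorial * |r| ^ m) * volume (euclideanBall m r) ^ m := by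
  set B := euclideanBall m r
  set M : ℝ≥0∞ := .ofReal (m.factorial * |r| ^ m)
  have hB : MeasurableSet B := measurableSet_euclideanBall m r
  set P : Set (Fin m → Fin m → ℝ) := univ.pi fun _ ↦ K ∩ B
  set Q : Set (Fin m → Fin m → ℝ) := univ.pi fun _ ↦ B
  have hP : MeasurableSet P := .univ_pi fun _ ↦ hK.inter hB
  have hQ : MeasurableSet Q := .univ_pi fun _ ↦ hB
  have hPQ : P ⊆ Q := pi_mono fun _ _ ↦ inter_subset_right
  have hvol (C : Set (Fin m → ℝ)) : volume C ^ m = volume (univ.pi fun _ : Fin m ↦ C) := by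
    rw [volume_pi_pi, Finset.prod_const, Finset.card_univ, Fintype.card_fin]
  have hdiff : ∫⁻ x in Q \ P, .ofReal |(Matrix.of x).det| ≤ M * volume (Q \ P) := by
    rw [← setLIntegral_const]
    exact setLIntegral_mono' (hQ.diff hP) fun x hx ↦ ENNReal.ofReal_le_ofReal <|
      abs_det_le_of_forall_mem_euclideanBall fun i ↦ hx.1 i (mem_univ i)
  calc detMoment B + M * volume (K ∩ B) ^ m
      = detMoment (K ∩ B) + (∫⁻ x in Q \ P, .ofReal |(Matrix.of x).det|) +
          M * volume (K ∩ B) ^ m := by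
        rw [detMoment, detMoment, ← lintegral_inter_add_sdiff _ Q hP,
          inter_eq_self_of_subset_right hPQ]
    _ ≤ detMoment K + M * volume (Q \ P) + M * volume (K ∩ B) ^ m := by
        exact add_le_add (add_le_add (detMoment_mono inter_subset_left) hdiff) le_rfl
    _ = detMoment K + M * volume B ^ m := by
        rw [add_assoc, ← mul_add, hvol, hvol, add_comm (volume (Q \ P)),
          measure_add_sdiff hP.nullMeasurableSet, union_eq_self_of_subset_left hPQ]

lemma detMoment_euclideanBall_le_of_volume_eq {K : Set (Fin (m + 1) → ℝ)} (hK : MeasurableSet K)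
    {R r : ℝ} (hKR : K ⊆ euclideanBall (m + 1) R) (hr : r ≠ 0)
    (hvol : volume K = volume (euclideanBall (m + 1) r)) :
    detMoment (euclideanBall (m + 1) r) ≤ detMoment K := by
  set B := euclideanBall (m + 1) r
  have hBfin : volume B ≠ ∞ := volume_euclideanBall_ne_top (m + 1) r
  set M : ℝ≥0∞ := .ofReal ((m + 1).factorial * |r| ^ (m + 1))
  have happrox {v : ℝ≥0∞} (hv : v < volume B) :
      detMoment B + M * v ^ (m + 1) ≤ detMoment K + M * volume B ^ (m + 1) := by
    obtain ⟨K', hK', hlt⟩ := exists_isCompetitor_real_sdiff_lt hK hKR hr hvol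
      (ENNReal.toReal_pos (tsub_pos_of_lt hv).ne' (ENNReal.sub_ne_top hBfin))
    have hle : volume (B \ K') ≤ volume B - v := (ENNReal.toReal_lt_toReal
      (measure_ne_top_of_subset sdiff_subset hBfin) (ENNReal.sub_ne_top hBfin)).1 hlt |>.le
    have hvK : v ≤ volume (K' ∩ B) := by
      refine ENNReal.le_of_add_le_add_right
        (measure_ne_top_of_subset (sdiff_subset (t := K')) hBfin) ?_
      rw [inter_comm, measure_inter_add_sdiff B hK'.measurableSet]
      exact (add_le_add le_rfl hle).trans_eq (add_tsub_cancel_of_le hv.le)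
    calc detMoment B + M * v ^ (m + 1)
        ≤ detMoment B + M * volume (K' ∩ B) ^ (m + 1) := by gcongr
      _ ≤ detMoment K' + M * volume B ^ (m + 1) :=
        detMoment_euclideanBall_add_le hK'.measurableSet r
      _ ≤ detMoment K + M * volume B ^ (m + 1) := by
        gcongr
        exact hK'.detMoment_le
  have : NeZero (volume B) := ⟨volume_euclideanBall_ne_zero hr⟩
  have hlim : Tendsto (fun v ↦ detMoment B + M * v ^ (m + 1)) (𝓝[<] volume B)
      (𝓝 (detMoment B + M * volume B ^ (m + 1))) :=
    ((ENNReal.Tendsto.const_mul (ENNReal.continuous_pow (m + 1)).continuousAt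
      (.inr ENNReal.ofReal_ne_top)).const_add _).mono_left nhdsWithin_le_nhds
  exact ENNReal.le_of_add_le_add_right
    (ENNReal.mul_ne_top ENNReal.ofReal_ne_top (ENNReal.pow_ne_top hBfin))
    (le_of_tendsto hlim (eventually_mem_nhdsWithin.mono fun _ ↦ happrox))

lemma detMoment_preimage_mul_volume_pow {f : (Fin m → ℝ) →ₗ[ℝ] Fin m → ℝ}
    (hf : LinearMap.det f ≠ 0) {K : Set (Fin m → ℝ)} (hK : MeasurableSet K) :
    detMoment (f ⁻¹' K) * volume K ^ (m + 1) = detMoment K * volume (f ⁻¹' K) ^ (m + 1) := by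
  have hvol : .ofReal |LinearMap.det f| * volume (f ⁻¹' K) = volume K := by
    rw [Measure.addHaar_preimage_linearMap _ hf, ← mul_assoc,
      ← ENNReal.ofReal_mul (abs_nonneg _), ← abs_mul, mul_inv_cancel₀ hf, abs_one,
      ENNReal.ofReal_one, one_mul]
  rw [← detMoment_preimage_linearMap hf hK, ← hvol]
  ring

lemma exists_volume_euclideanBall_eq {v : ℝ≥0∞} (hv : v ≠ 0) (hvfin : v ≠ ∞) :
    ∃ r : ℝ, r ≠ 0 ∧ volume (euclideanBall (m + 1) r) = v := by
  have hb0 := volume_euclideanBall_one_ne_zero (m + 1)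
  have hbfin := volume_euclideanBall_ne_top (m + 1) 1
  have hqfin : v / volume (euclideanBall (m + 1) 1) ≠ ∞ := ENNReal.div_ne_top hvfin hb0
  have hq : 0 < (v / volume (euclideanBall (m + 1) 1)).toReal :=
    ENNReal.toReal_pos (ENNReal.div_ne_zero.2 ⟨hv, hbfin⟩) hqfin
  refine ⟨_, (Real.rpow_pos_of_pos hq ((m + 1 : ℕ) : ℝ)⁻¹).ne', ?_⟩
  rw [volume_euclideanBall (Real.rpow_pos_of_pos hq _).ne', abs_of_pos (Real.rpow_pos_of_pos hq _),
    Real.rpow_inv_natCast_pow hq.le m.succ_ne_zero, ENNReal.ofReal_toReal hqfin,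
    ENNReal.div_mul_cancel hb0 hbfin]

lemma detMoment_euclideanBall_mul_volume_pow_le_of_subset {K : Set (Fin (m + 1) → ℝ)}
    (hK : MeasurableSet K) {R : ℝ} (hKR : K ⊆ euclideanBall (m + 1) R) :
    detMoment (euclideanBall (m + 1) 1) * volume K ^ (m + 2) ≤
      detMoment K * volume (euclideanBall (m + 1) 1) ^ (m + 2) := by
  rcases eq_or_ne (volume K) 0 with h0 | h0
  · rw [h0, zero_pow (by omega), mul_zero]
    exact zero_le
  obtain ⟨r, hr, hvol⟩ := exists_volume_euclideanBall_eq (m := m) h0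
    (measure_ne_top_of_subset hKR (volume_euclideanBall_ne_top _ R))
  calc detMoment (euclideanBall (m + 1) 1) * volume K ^ (m + 2)
      = detMoment (euclideanBall (m + 1) r) * volume (euclideanBall (m + 1) 1) ^ (m + 2) := by
        rw [← hvol, euclideanBall_eq_preimage_smul hr, detMoment_preimage_mul_volume_pow
          (det_inv_smul_id_ne_zero hr) (measurableSet_euclideanBall _ 1)]
    _ ≤ detMoment K * volume (euclideanBall (m + 1) 1) ^ (m + 2) := by
        gcongr
        exact detMoment_euclideanBall_le_of_volume_eq hK hKR hr hvol.symm

lemma iUnion_euclideanBall_natCast (m : ℕ) : ⋃ N : ℕ, euclideanBall m N = univ := by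
  refine eq_univ_of_forall fun x ↦ mem_iUnion.2 ?_
  obtain ⟨N, hN⟩ := exists_nat_ge √(∑ i, x i ^ 2)
  exact ⟨N, (Real.sqrt_le_left N.cast_nonneg).1 hN⟩

lemma monotone_euclideanBall_natCast (m : ℕ) : Monotone fun N : ℕ ↦ euclideanBall m N :=
  fun a b hab x hx ↦ le_trans (b := (a : ℝ) ^ 2) hx (by gcongr)

theorem detMoment_euclideanBall_mul_volume_pow_le {K : Set (Fin m → ℝ)} (hK : MeasurableSet K) :
    detMoment (euclideanBall m 1) * volume K ^ (m + 1) ≤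
      detMoment K * volume (euclideanBall m 1) ^ (m + 1) := by
  rcases eq_or_ne (volume K) 0 with h0 | h0
  · rw [h0, zero_pow m.succ_ne_zero, mul_zero]
    exact zero_le
  cases m with
  | zero =>
    have hKuniv : K = univ :=
      Subsingleton.eq_univ_of_nonempty (nonempty_of_measure_ne_zero h0)
    have hBuniv : euclideanBall 0 1 = univ := Subsingleton.eq_univ_of_nonempty
      (nonempty_of_measure_ne_zero (volume_euclideanBall_one_ne_zero 0))
    rw [hKuniv, hBuniv]
  | succ m =>
    have hmono : Monotone fun N : ℕ ↦ K ∩ euclideanBall (m + 1) N := fun a b hab ↦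
      inter_subset_inter_right K (monotone_euclideanBall_natCast _ hab)
    have hlim := tendsto_measure_iUnion_atTop (μ := volume) hmono
    rw [← inter_iUnion, iUnion_euclideanBall_natCast, inter_univ] at hlim
    refine le_of_tendsto (ENNReal.Tendsto.const_mul (ENNReal.Tendsto.pow hlim)
      (.inl (pow_ne_zero _ h0))) (.of_forall fun N ↦ ?_)
    refine (detMoment_euclideanBall_mul_volume_pow_le_of_subset
      (hK.inter (measurableSet_euclideanBall _ N)) inter_subset_right).trans ?_
    gcongr
    exact detMoment_mono inter_subset_left

end BallMoment

section GraphSection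

variable {m : ℕ}

/-- The section of `L` by the hyperplane `x₀ = a · (x₁, …, x_m)`, projected to the last `m`
coordinates. -/
def graphSection (L : Set (Fin (m + 1) → ℝ)) (a : Fin m → ℝ) : Set (Fin m → ℝ) :=
  {y | (Fin.cons (a ⬝ᵥ y) y : Fin (m + 1) → ℝ) ∈ L}

lemma measurableSet_setOf_mem_graphSection {L : Set (Fin (m + 1) → ℝ)} (hL : MeasurableSet L) :
    MeasurableSet {p : (Fin m → ℝ) × (Fin m → ℝ) | p.2 ∈ graphSection L p.1} := by
  have hgraph : Measurable fun p : (Fin m → ℝ) × (Fin m → ℝ) ↦ (p.2, p.1 ⬝ᵥ p.2) := by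
    unfold dotProduct
    fun_prop
  exact ((measurePreserving_cons m).measurable.comp hgraph) hL

variable {L : Set (Fin (m + 1) → ℝ)}

lemma measurableSet_graphSection (hL : MeasurableSet L) (a : Fin m → ℝ) :
    MeasurableSet (graphSection L a) :=
  measurable_prodMk_left (measurableSet_setOf_mem_graphSection hL)

lemma measurable_volume_graphSection (hL : MeasurableSet L) :
    Measurable fun a ↦ volume (graphSection L a) :=
  measurable_measure_prodMk_left (measurableSet_setOf_mem_graphSection hL)

lemma ae_det_ne_zero (m : ℕ) : ∀ᵐ x : Fin m → Fin m → ℝ, (Matrix.of x).det ≠ 0 := by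
  have hcont : Continuous fun x : Fin m → Fin m → ℝ ↦ (Matrix.of x).det :=
    Continuous.matrix_det continuous_id
  -- On each line in the direction of the identity matrix, `det` is a characteristic polynomial.
  refine ae_mem_of_ae_add_linearMap_mem
    (LinearMap.toSpanSingleton ℝ (Fin m → Fin m → ℝ) (1 : Matrix (Fin m) (Fin m) ℝ))
    volume volume (measurableSet_eq_fun hcont.measurable measurable_const).compl fun x ↦ ?_
  have hroots : {s : ℝ | (-Matrix.of x).charpoly.IsRoot s}.Finite :=
    Polynomial.finite_setOfPred_isRoot (Matrix.charpoly_monic _).ne_zero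
  filter_upwards [measure_eq_zero_iff_ae_notMem.1 (hroots.measure_zero volume)] with s hs hdet
  refine hs ?_
  rw [Polynomial.IsRoot, Matrix.eval_charpoly, ← hdet, sub_neg_eq_add, add_comm,
    Matrix.scalar_apply, ← Matrix.smul_one_eq_diagonal]
  rfl

lemma volume_pow_eq_lintegral_axisFiber (hL : MeasurableSet L) (k : ℕ) :
    volume L ^ k = ∫⁻ y : Fin k → Fin m → ℝ, volume (univ.pi fun i ↦ axisFiber L (y i)) := by
  have hpi : MeasurableSet (univ.pi fun _ : Fin k ↦ L) := .univ_pi fun _ ↦ hL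
  have hcons := measurePreserving_cons_pi m (Fin k)
  calc volume L ^ k = volume (univ.pi fun _ : Fin k ↦ L) := by
        rw [volume_pi_pi, Finset.prod_const, Finset.card_univ, Fintype.card_fin]
    _ = ∫⁻ y : Fin k → Fin m → ℝ, volume (univ.pi fun i ↦ axisFiber L (y i)) := by
        rw [← hcons.measure_preimage hpi.nullMeasurableSet, Measure.volume_eq_prod,
          Measure.prod_apply (hcons.measurable hpi)]
        rfl

lemma volume_pi_axisFiber {y : Fin m → Fin m → ℝ} (hy : (Matrix.of y).det ≠ 0) :
    volume (univ.pi fun i ↦ axisFiber L (y i)) =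
      .ofReal |(Matrix.of y).det| * volume {a | ∀ i, y i ∈ graphSection L a} := by
  have hpre : {a | ∀ i, y i ∈ graphSection L a} =
      Matrix.toLin' (Matrix.of y) ⁻¹' univ.pi fun i ↦ axisFiber L (y i) := by
    ext a
    simp only [mem_ofPred_eq, mem_preimage, mem_univ_pi, graphSection, axisFiber,
      Matrix.toLin'_apply, Matrix.mulVec, dotProduct_comm a]
    rfl
  rw [hpre, Measure.addHaar_preimage_linearMap _ (by rwa [LinearMap.det_toLin']),
    LinearMap.det_toLin', ← mul_assoc, ← ENNReal.ofReal_mul (abs_nonneg _), ← abs_mul,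
    mul_inv_cancel₀ hy, abs_one, ENNReal.ofReal_one, one_mul]

lemma lintegral_detMoment_graphSection (hL : MeasurableSet L) :
    ∫⁻ a, detMoment (graphSection L a) = ∫⁻ y : Fin m → Fin m → ℝ,
      .ofReal |(Matrix.of y).det| * volume {a | ∀ i, y i ∈ graphSection L a} := by
  set T : Set ((Fin m → ℝ) × (Fin m → Fin m → ℝ)) := {p | ∀ i, p.2 i ∈ graphSection L p.1}
  have hT : MeasurableSet T := measurableSet_setOfPred.2 <| .forall fun i ↦ by
    have hpair : Measurable fun p : (Fin m → ℝ) × (Fin m → Fin m → ℝ) ↦ (p.1, p.2 i) := by fun_prop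
    exact measurableSet_setOfPred.1 (hpair (measurableSet_setOf_mem_graphSection hL))
  have hdet : Measurable (T.indicator fun p ↦ ENNReal.ofReal |(Matrix.of p.2).det|) :=
    ((measurable_ofReal_abs_det m).comp measurable_snd).indicator hT
  calc ∫⁻ a, detMoment (graphSection L a)
      = ∫⁻ a, ∫⁻ y, T.indicator (fun p ↦ .ofReal |(Matrix.of p.2).det|) (a, y) := by
        refine lintegral_congr fun a ↦ ?_
        rw [detMoment, ← lintegral_indicator (.univ_pi fun _ ↦ measurableSet_graphSection hL a)]
        refine lintegral_congr fun y ↦ ?_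
        have hmem : (y ∈ univ.pi fun _ ↦ graphSection L a) ↔ (a, y) ∈ T := mem_univ_pi
        by_cases hy : (a, y) ∈ T
        · rw [indicator_of_mem hy, indicator_of_mem (hmem.2 hy)]
        · rw [indicator_of_notMem hy, indicator_of_notMem (mt hmem.1 hy)]
    _ = ∫⁻ y, ∫⁻ a, T.indicator (fun p ↦ .ofReal |(Matrix.of p.2).det|) (a, y) :=
        lintegral_lintegral_swap hdet.aemeasurable
    _ = ∫⁻ y : Fin m → Fin m → ℝ, .ofReal |(Matrix.of y).det| * volume ((·, y) ⁻¹' T) :=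
        lintegral_congr fun y ↦ by
          rw [← lintegral_indicator_const (measurable_prodMk_right hT)]
          rfl

theorem volume_pow_eq_lintegral_detMoment (hL : MeasurableSet L) :
    volume L ^ m = ∫⁻ a, detMoment (graphSection L a) := by
  rw [volume_pow_eq_lintegral_axisFiber hL, lintegral_detMoment_graphSection hL]
  exact lintegral_congr_ae ((ae_det_ne_zero m).mono fun y ↦ volume_pi_axisFiber)

lemma exists_linearMap_det_eq_sqrt_sum_sq_eq (a : Fin m → ℝ) :
    ∃ f : (Fin m → ℝ) →ₗ[ℝ] Fin m → ℝ, LinearMap.det f = √(1 + a ⬝ᵥ a) ∧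
      ∀ y, ∑ i, f y i ^ 2 = (a ⬝ᵥ y) ^ 2 + ∑ i, y i ^ 2 := by
  set q := √(1 + a ⬝ᵥ a)
  have hq : q ^ 2 = 1 + a ⬝ᵥ a :=
    Real.sq_sqrt (add_nonneg zero_le_one (Finset.sum_nonneg fun i _ ↦ mul_self_nonneg (a i)))
  have hq0 : 1 + q ≠ 0 := (add_pos_of_pos_of_nonneg one_pos (Real.sqrt_nonneg _)).ne'
  have ha : a ⬝ᵥ a = q ^ 2 - 1 := eq_sub_of_add_eq' hq.symm
  -- `id + (1 + q)⁻¹ • a aᵀ` is the square root of the positive definite matrix `1 + a aᵀ`.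
  refine ⟨LinearMap.transvection (Fintype.linearCombination ℝ a) ((1 + q)⁻¹ • a), ?_, fun y ↦ ?_⟩
  · rw [LinearMap.transvection.det, map_smul, Fintype.linearCombination_apply]
    change 1 + (1 + q)⁻¹ * (a ⬝ᵥ a) = q
    rw [ha]
    field_simp
    ring
  have hterm (i : Fin m) : (y i + (y ⬝ᵥ a) * ((1 + q)⁻¹ * a i)) ^ 2 =
      y i ^ 2 + 2 * (y ⬝ᵥ a) * (1 + q)⁻¹ * (y i * a i) +
        ((y ⬝ᵥ a) * (1 + q)⁻¹) ^ 2 * (a i * a i) := by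
    ring
  calc ∑ i, (y i + (y ⬝ᵥ a) * ((1 + q)⁻¹ * a i)) ^ 2
      = ∑ i, y i ^ 2 + 2 * (y ⬝ᵥ a) * (1 + q)⁻¹ * (y ⬝ᵥ a) +
          ((y ⬝ᵥ a) * (1 + q)⁻¹) ^ 2 * (a ⬝ᵥ a) := by
        simp only [hterm, Finset.sum_add_distrib, ← Finset.mul_sum]
        rfl
    _ = (a ⬝ᵥ y) ^ 2 + ∑ i, y i ^ 2 := by
        rw [dotProduct_comm a y, ha]
        field_simp
        ring

lemma exists_linearMap_graphSection_euclideanBall (a : Fin m → ℝ) :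
    ∃ f : (Fin m → ℝ) →ₗ[ℝ] Fin m → ℝ, LinearMap.det f ≠ 0 ∧
      graphSection (euclideanBall (m + 1) 1) a = f ⁻¹' euclideanBall m 1 := by
  obtain ⟨f, hdet, hf⟩ := exists_linearMap_det_eq_sqrt_sum_sq_eq a
  refine ⟨f, ?_, ?_⟩
  · rw [hdet]
    exact (Real.sqrt_pos.2 <| add_pos_of_pos_of_nonneg one_pos <|
      Finset.sum_nonneg fun i _ ↦ mul_self_nonneg (a i)).ne'
  · ext y
    simp only [graphSection, euclideanBall, mem_preimage, mem_ofPred_eq, Fin.sum_univ_succ,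
      Fin.cons_zero, Fin.cons_succ, hf]

theorem detMoment_mul_lintegral_volume_graphSection_le (hL : MeasurableSet L) :
    detMoment (euclideanBall m 1) * ∫⁻ a, volume (graphSection L a) ^ (m + 1) ≤
      volume L ^ m * volume (euclideanBall m 1) ^ (m + 1) := by
  rw [volume_pow_eq_lintegral_detMoment hL,
    ← lintegral_mul_const' _ _ (ENNReal.pow_ne_top (volume_euclideanBall_ne_top m 1)),
    ← lintegral_const_mul _ ((measurable_volume_graphSection hL).pow_const _)]
  exact lintegral_mono fun a ↦
    detMoment_euclideanBall_mul_volume_pow_le (measurableSet_graphSection hL a)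

theorem detMoment_mul_lintegral_volume_graphSection_euclideanBall (m : ℕ) :
    detMoment (euclideanBall m 1) *
        ∫⁻ a, volume (graphSection (euclideanBall (m + 1) 1) a) ^ (m + 1) =
      volume (euclideanBall (m + 1) 1) ^ m * volume (euclideanBall m 1) ^ (m + 1) := by
  have hB := measurableSet_euclideanBall (m + 1) 1
  rw [volume_pow_eq_lintegral_detMoment hB,
    ← lintegral_mul_const' _ _ (ENNReal.pow_ne_top (volume_euclideanBall_ne_top m 1)),
    ← lintegral_const_mul _ ((measurable_volume_graphSection hB).pow_const _)]
  refine lintegral_congr fun a ↦ ?_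
  obtain ⟨f, hdet, hf⟩ := exists_linearMap_graphSection_euclideanBall a
  rw [hf, detMoment_preimage_mul_volume_pow hdet (measurableSet_euclideanBall m 1)]

end GraphSection

section HyperplaneSection

variable {m : ℕ}

/-- The coefficients `a` for which the hyperplane `w^⊥` is the graph `x₀ = a · (x₁, …, x_m)`; the
junk value `0` where `w 0 = 0`. -/
def hyperplaneSlope (w : EuclideanSpace ℝ (Fin (m + 1))) : Fin m → ℝ :=
  fun i ↦ -w i.succ / w 0

lemma measurable_hyperplaneSlope :
    Measurable (hyperplaneSlope : EuclideanSpace ℝ (Fin (m + 1)) → Fin m → ℝ) := by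
  unfold hyperplaneSlope
  fun_prop

lemma hyperplaneSlope_smul {r : ℝ} (hr : r ≠ 0) (w : EuclideanSpace ℝ (Fin (m + 1))) :
    hyperplaneSlope (r • w) = hyperplaneSlope w := by
  ext i
  simp only [hyperplaneSlope, PiLp.smul_apply, smul_eq_mul, ← mul_neg, mul_div_mul_left _ _ hr]

lemma hyperplaneSlope_toLp_cons (t : ℝ) (y : Fin m → ℝ) :
    hyperplaneSlope (WithLp.toLp 2 (Fin.cons t y)) = (-t⁻¹) • y := by
  ext i
  simp only [hyperplaneSlope, Fin.cons_succ, Fin.cons_zero, Pi.smul_apply, smul_eq_mul]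
  ring

lemma sqrt_one_add_hyperplaneSlope {w : EuclideanSpace ℝ (Fin (m + 1))} (hw : ‖w‖ = 1)
    (h0 : w 0 ≠ 0) : √(1 + hyperplaneSlope w ⬝ᵥ hyperplaneSlope w) = |w 0|⁻¹ := by
  have hsq : w 0 ^ 2 + ∑ i : Fin m, w i.succ ^ 2 = 1 := by
    rw [← Fin.sum_univ_succ fun i ↦ w i ^ 2, ← EuclideanSpace.real_norm_sq_eq, hw, one_pow]
  have hdot : hyperplaneSlope w ⬝ᵥ hyperplaneSlope w = (∑ i : Fin m, w i.succ ^ 2) / w 0 ^ 2 := by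
    rw [Finset.sum_div]
    exact Finset.sum_congr rfl fun i _ ↦ by simp only [hyperplaneSlope]; ring
  rw [hdot, one_add_div (pow_ne_zero 2 h0), hsq, Real.sqrt_div zero_le_one, Real.sqrt_one,
    Real.sqrt_sq_eq_abs, one_div]

lemma apply_zero_eq_hyperplaneSlope_dotProduct {w : EuclideanSpace ℝ (Fin (m + 1))} (h0 : w 0 ≠ 0)
    (y : (ℝ ∙ w)ᗮ) :
    (y : EuclideanSpace ℝ (Fin (m + 1))) 0 =
      hyperplaneSlope w ⬝ᵥ Fin.tail (y : EuclideanSpace ℝ (Fin (m + 1))) := by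
  have horth := Submodule.mem_orthogonal_singleton_iff_inner_right.1 y.2
  rw [PiLp.inner_apply, Fin.sum_univ_succ] at horth
  simp only [RCLike.inner_apply, conj_trivial] at horth
  simp only [dotProduct, hyperplaneSlope, Fin.tail, div_mul_eq_mul_div, ← Finset.sum_div,
    neg_mul, Finset.sum_neg_distrib, mul_comm (w _)]
  rw [eq_div_iff h0]
  linarith

lemma volume_preimage_of_sum_sq_eq_norm_sq {V : Type*} [NormedAddCommGroup V]
    [InnerProductSpace ℝ V] [FiniteDimensional ℝ V] [MeasurableSpace V] [BorelSpace V]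
    (hV : Module.finrank ℝ V = m) {g : V →ₗ[ℝ] Fin m → ℝ} (hg : ∀ y, ∑ i, g y i ^ 2 = ‖y‖ ^ 2)
    (S : Set (Fin m → ℝ)) : volume (g ⁻¹' S) = volume S := by
  have hnorm (y : V) : ‖WithLp.toLp 2 (g y)‖ = ‖y‖ := by
    rw [← sq_eq_sq₀ (norm_nonneg _) (norm_nonneg _), EuclideanSpace.real_norm_sq_eq, ← hg]
  let e : V ≃ₗᵢ[ℝ] EuclideanSpace ℝ (Fin m) := LinearIsometry.toLinearIsometryEquiv
    ⟨(WithLp.linearEquiv 2 ℝ (Fin m → ℝ)).symm.toLinearMap ∘ₗ g, hnorm⟩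
    (hV.trans finrank_euclideanSpace_fin.symm)
  have hpre : g ⁻¹' S = e ⁻¹' (WithLp.ofLp ⁻¹' S) := rfl
  rw [hpre, e.measurePreserving.measure_preimage_emb e.toHomeomorph.measurableEmbedding,
    (PiLp.volume_preserving_ofLp (Fin m)).measure_preimage_emb
      (MeasurableEquiv.toLp 2 (Fin m → ℝ)).symm.measurableEmbedding]

lemma volume_orthogonal_section {w : EuclideanSpace ℝ (Fin (m + 1))} (hw : ‖w‖ = 1) (h0 : w 0 ≠ 0)
    (L : Set (EuclideanSpace ℝ (Fin (m + 1)))) :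
    volume {y : (ℝ ∙ w)ᗮ | (y : EuclideanSpace ℝ (Fin (m + 1))) ∈ L} =
      .ofReal |w 0|⁻¹ * volume (graphSection (WithLp.toLp 2 ⁻¹' L) (hyperplaneSlope w)) := by
  set a := hyperplaneSlope w with ha
  obtain ⟨f, hdet, hf⟩ := exists_linearMap_det_eq_sqrt_sum_sq_eq a
  rw [ha, sqrt_one_add_hyperplaneSlope hw h0] at hdet
  let tail : (ℝ ∙ w)ᗮ →ₗ[ℝ] Fin m → ℝ :=
    LinearMap.funLeft ℝ ℝ Fin.succ ∘ₗ (WithLp.linearEquiv 2 ℝ _).toLinearMap ∘ₗ (ℝ ∙ w)ᗮ.subtype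
  have hsum (y : (ℝ ∙ w)ᗮ) : ∑ i, (f ∘ₗ tail) y i ^ 2 = ‖y‖ ^ 2 := by
    rw [Submodule.coe_norm, EuclideanSpace.real_norm_sq_eq, Fin.sum_univ_succ,
      apply_zero_eq_hyperplaneSlope_dotProduct h0, LinearMap.comp_apply, hf]
    rfl
  have hfin : Module.finrank ℝ (ℝ ∙ w)ᗮ = m := by
    have : Fact (Module.finrank ℝ (EuclideanSpace ℝ (Fin (m + 1))) = m + 1) :=
      ⟨finrank_euclideanSpace_fin⟩
    exact Submodule.finrank_orthogonal_span_singleton fun h ↦ h0 (by rw [h]; rfl)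
  have hinj : Injective f := (f.equivOfDetNeZero (by simpa [hdet] using h0)).injective
  have hpre : {y : (ℝ ∙ w)ᗮ | (y : EuclideanSpace ℝ (Fin (m + 1))) ∈ L} =
      (f ∘ₗ tail) ⁻¹' (f '' graphSection (WithLp.toLp 2 ⁻¹' L) a) := by
    ext y
    rw [mem_preimage, LinearMap.comp_apply, hinj.mem_set_image]
    change _ ↔ WithLp.toLp 2 (Fin.cons (a ⬝ᵥ Fin.tail y.1) (Fin.tail y.1)) ∈ L
    rw [← apply_zero_eq_hyperplaneSlope_dotProduct h0, Fin.cons_self_tail]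
    rfl
  rw [hpre, volume_preimage_of_sum_sq_eq_norm_sq hfin hsum, Measure.addHaar_image_linearMap, hdet,
    abs_of_nonneg (inv_nonneg.2 (abs_nonneg _))]

lemma volume_orthogonal_closedBall {w : EuclideanSpace ℝ (Fin (m + 1))} (hw : w ≠ 0) :
    volume {y : (ℝ ∙ w)ᗮ | (y : EuclideanSpace ℝ (Fin (m + 1))) ∈ closedBall 0 1} =
      volume (euclideanBall m 1) := by
  have : Fact (Module.finrank ℝ (EuclideanSpace ℝ (Fin (m + 1))) = m + 1) :=
    ⟨finrank_euclideanSpace_fin⟩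
  let e := (OrthonormalBasis.fromOrthogonalSpanSingleton (𝕜 := ℝ) m hw).repr
  have hpre : {y : (ℝ ∙ w)ᗮ | (y : EuclideanSpace ℝ (Fin (m + 1))) ∈ closedBall 0 1} =
      e ⁻¹' closedBall 0 1 := by
    ext y
    simp only [mem_ofPred_eq, mem_preimage, mem_closedBall_zero_iff, e.norm_map,
      Submodule.coe_norm]
  rw [hpre, e.measurePreserving.measure_preimage measurableSet_closedBall.nullMeasurableSet,
    ← toLp_preimage_closedBall, (PiLp.volume_preserving_toLp (Fin m)).measure_preimage
      measurableSet_closedBall.nullMeasurableSet]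

end HyperplaneSection

section Sphere

lemma lintegral_eq_lintegral_toSphere_volumeIoiPow {E : Type*} [NormedAddCommGroup E]
    [NormedSpace ℝ E] [FiniteDimensional ℝ E] [Nontrivial E] [MeasurableSpace E] [BorelSpace E]
    (μ : Measure E) [μ.IsAddHaarMeasure] {g : E → ℝ≥0∞} (hg : Measurable g) :
    ∫⁻ x, g x ∂μ = ∫⁻ w, ∫⁻ r, g (r.1 • w.1)
      ∂Measure.volumeIoiPow (Module.finrank ℝ E - 1) ∂μ.toSphere := by
  have hpolar : Measurable fun p : sphere (0 : E) 1 × Ioi (0 : ℝ) ↦ g (p.2.1 • p.1.1) :=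
    hg.comp (by fun_prop)
  calc ∫⁻ x, g x ∂μ = ∫⁻ x : ({0}ᶜ : Set E), g x ∂μ.comap (↑) := by
        rw [lintegral_subtype_comap (measurableSet_singleton (0 : E)).compl g,
          restrict_compl_singleton]
    _ = _ := by
        rw [← lintegral_prod _ hpolar.aemeasurable,
          ← μ.measurePreserving_homeomorphUnitSphereProd.lintegral_comp hpolar]
        refine lintegral_congr fun x ↦ ?_
        simp [smul_smul, mul_inv_cancel₀ (norm_ne_zero_iff.2 x.2)]

lemma ae_toSphere_notMem_submodule {E : Type*} [NormedAddCommGroup E] [NormedSpace ℝ E]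
    [FiniteDimensional ℝ E] [MeasurableSpace E] [BorelSpace E] (μ : Measure E) [μ.IsAddHaarMeasure]
    {s : Submodule ℝ E} (hs : s ≠ ⊤) :
    ∀ᵐ w : sphere (0 : E) 1 ∂μ.toSphere, (w : E) ∉ s := by
  have hmeas : MeasurableSet {w : sphere (0 : E) 1 | (w : E) ∈ s} :=
    measurable_subtype_coe s.closed_of_finiteDimensional.measurableSet
  have hnull : μ.toSphere {w : sphere (0 : E) 1 | (w : E) ∈ s} = 0 := by
    rw [Measure.toSphere_apply' _ hmeas, measure_mono_null _ (Measure.addHaar_submodule μ s hs),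
      mul_zero]
    rintro _ ⟨r, -, _, ⟨w, hw, rfl⟩, rfl⟩
    exact s.smul_mem r hw
  exact measure_eq_zero_iff_ae_notMem.1 hnull

variable {m : ℕ}

lemma ae_toSphere_apply_zero_ne_zero (m : ℕ) :
    ∀ᵐ w : sphere (0 : EuclideanSpace ℝ (Fin (m + 1))) 1 ∂volume.toSphere, w.1 0 ≠ 0 :=
  ae_toSphere_notMem_submodule volume
    (s := LinearMap.ker (PiLp.projₗ (𝕜 := ℝ) 2 (fun _ : Fin (m + 1) ↦ ℝ) 0)) <|
    mt Submodule.eq_top_iff'.1 fun h ↦ one_ne_zero <| show (1 : ℝ) = 0 by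
      simpa using h (EuclideanSpace.single 0 1)

lemma lintegral_comp_neg_inv_smul {ψ : (Fin m → ℝ) → ℝ≥0∞} (hψ : Measurable ψ) {t : ℝ}
    (ht : t ≠ 0) : ∫⁻ y, ψ ((-t⁻¹) • y) = .ofReal (|t| ^ m) * ∫⁻ a, ψ a := by
  rw [← lintegral_map hψ (measurable_const_smul _),
    Measure.map_addHaar_smul volume (neg_ne_zero.2 (inv_ne_zero ht)), lintegral_smul_measure,
    smul_eq_mul, Module.finrank_fin_fun, abs_inv, abs_pow, abs_neg, abs_inv, inv_pow, inv_inv]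

lemma setLIntegral_slab_comp_hyperplaneSlope {ψ : (Fin m → ℝ) → ℝ≥0∞} (hψ : Measurable ψ) :
    ∫⁻ x in {x : EuclideanSpace ℝ (Fin (m + 1)) | |x 0| < 1}, ψ (hyperplaneSlope x) =
      (∫⁻ t : ℝ in Ioo (-1) 1, .ofReal (|t| ^ m)) * ∫⁻ a, ψ a := by
  have hcons := (PiLp.volume_preserving_toLp (Fin (m + 1))).comp (measurePreserving_cons m)
  have hψslope : Measurable fun x : EuclideanSpace ℝ (Fin (m + 1)) ↦ ψ (hyperplaneSlope x) :=
    hψ.comp measurable_hyperplaneSlope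
  have hslab : MeasurableSet {x : EuclideanSpace ℝ (Fin (m + 1)) | |x 0| < 1} :=
    measurableSet_lt (by fun_prop) measurable_const
  have hpre : (WithLp.toLp 2 ∘ fun p : (Fin m → ℝ) × ℝ ↦ (Fin.cons p.2 p.1 : Fin (m + 1) → ℝ)) ⁻¹'
      {x | |x 0| < 1} = univ ×ˢ Ioo (-1) 1 := by
    ext p
    simp [abs_lt]
  rw [← hcons.setLIntegral_comp_preimage hslab hψslope, hpre, Measure.volume_eq_prod,
    ← Measure.prod_restrict, Measure.restrict_univ, ← lintegral_mul_const _ (by fun_prop)]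
  refine (lintegral_prod_symm' _ (hψslope.comp hcons.measurable)).trans ?_
  refine lintegral_congr_ae (ae_restrict_of_ae ?_)
  filter_upwards [Measure.ae_ne volume (0 : ℝ)] with t ht
  simp only [comp_apply, hyperplaneSlope_toLp_cons]
  exact lintegral_comp_neg_inv_smul hψ ht

lemma lintegral_volumeIoiPow_indicator_slab {w : EuclideanSpace ℝ (Fin (m + 1))} (h0 : w 0 ≠ 0)
    (ψ : (Fin m → ℝ) → ℝ≥0∞) :
    ∫⁻ r, {x : EuclideanSpace ℝ (Fin (m + 1)) | |x 0| < 1}.indicator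
        (fun x ↦ ψ (hyperplaneSlope x)) (r.1 • w) ∂Measure.volumeIoiPow m =
      ψ (hyperplaneSlope w) * .ofReal (|w 0|⁻¹ ^ (m + 1) / (m + 1)) := by
  have hpos : 0 < |w 0| := abs_pos.2 h0
  set ρ : Ioi (0 : ℝ) := ⟨|w 0|⁻¹, inv_pos.2 hpos⟩
  rw [← Measure.volumeIoiPow_apply_Iio m ρ, ← lintegral_indicator_const measurableSet_Iio]
  refine lintegral_congr fun r ↦ ?_
  have hmem : |(r.1 • w) 0| < 1 ↔ r < ρ := by
    rw [PiLp.smul_apply, smul_eq_mul, abs_mul, abs_of_pos r.2, ← lt_div_iff₀ hpos, one_div]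
    rfl
  simp only [indicator, mem_ofPred_eq, mem_Iio, hmem, hyperplaneSlope_smul r.2.ne']

lemma exists_lintegral_toSphere_comp_hyperplaneSlope_eq (m : ℕ) :
    ∃ C : ℝ≥0∞, ∀ ψ : (Fin m → ℝ) → ℝ≥0∞, Measurable ψ →
      ∫⁻ w : sphere (0 : EuclideanSpace ℝ (Fin (m + 1))) 1,
        .ofReal |w.1 0|⁻¹ ^ (m + 1) * ψ (hyperplaneSlope w.1) ∂volume.toSphere =
          C * ∫⁻ a, ψ a := by
  refine ⟨(m + 1 : ℕ) * ∫⁻ t : ℝ in Ioo (-1) 1, .ofReal (|t| ^ m), fun ψ hψ ↦ ?_⟩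
  have hslab : MeasurableSet {x : EuclideanSpace ℝ (Fin (m + 1)) | |x 0| < 1} :=
    measurableSet_lt (by fun_prop) measurable_const
  have hψslope : Measurable fun x : EuclideanSpace ℝ (Fin (m + 1)) ↦ ψ (hyperplaneSlope x) :=
    hψ.comp measurable_hyperplaneSlope
  rw [mul_assoc, ← setLIntegral_slab_comp_hyperplaneSlope hψ, ← lintegral_indicator hslab,
    lintegral_eq_lintegral_toSphere_volumeIoiPow volume (hψslope.indicator hslab),
    ← lintegral_const_mul' _ _ (ENNReal.natCast_ne_top _), finrank_euclideanSpace_fin,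
    Nat.add_sub_cancel]
  refine lintegral_congr_ae ?_
  filter_upwards [ae_toSphere_apply_zero_ne_zero m] with w h0
  rw [lintegral_volumeIoiPow_indicator_slab h0, ← ENNReal.ofReal_pow (by positivity),
    mul_left_comm, ← ENNReal.ofReal_natCast, ← ENNReal.ofReal_mul (by positivity), mul_comm]
  congr 2
  push_cast
  field_simp

lemma exists_lintegral_sphMeasure_volume_section_eq (m : ℕ) :
    ∃ C : ℝ≥0∞, ∀ L : Set (EuclideanSpace ℝ (Fin (m + 1))), MeasurableSet L →
      ∫⁻ w, volume {y : (ℝ ∙ w.1)ᗮ | (y : EuclideanSpace ℝ (Fin (m + 1))) ∈ L} ^ (m + 1)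
        ∂sphMeasure (m + 1) =
          C * ∫⁻ a, volume (graphSection (WithLp.toLp 2 ⁻¹' L) a) ^ (m + 1) := by
  obtain ⟨C, hC⟩ := exists_lintegral_toSphere_comp_hyperplaneSlope_eq m
  refine ⟨((volume : Measure (EuclideanSpace ℝ (Fin (m + 1)))).toSphere univ)⁻¹ * C, fun L hL ↦ ?_⟩
  have hL' : MeasurableSet (WithLp.toLp 2 ⁻¹' L : Set (Fin (m + 1) → ℝ)) :=
    (PiLp.volume_preserving_toLp (Fin (m + 1))).measurable hL
  rw [sphMeasure, lintegral_smul_measure, mul_assoc,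
    ← hC _ ((measurable_volume_graphSection hL').pow_const _), smul_eq_mul]
  congr 1
  refine lintegral_congr_ae ?_
  filter_upwards [ae_toSphere_apply_zero_ne_zero m] with w h0
  rw [volume_orthogonal_section (norm_eq_of_mem_sphere w) h0, mul_pow]

lemma isProbabilityMeasure_sphMeasure (m : ℕ) : IsProbabilityMeasure (sphMeasure (m + 1)) := by
  have : NeZero (volume : Measure (EuclideanSpace ℝ (Fin (m + 1)))).toSphere :=
    ⟨Measure.toSphere_ne_zero _⟩
  exact isProbabilityMeasureSMul

end Sphere

section Busemann

variable {m : ℕ}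

lemma volume_preimage_toLp {L : Set (EuclideanSpace ℝ (Fin m))} (hL : MeasurableSet L) :
    volume (WithLp.toLp 2 ⁻¹' L : Set (Fin m → ℝ)) = volume L :=
  (PiLp.volume_preserving_toLp (Fin m)).measure_preimage hL.nullMeasurableSet

lemma lintegral_sphMeasure_volume_section_closedBall (m : ℕ) :
    ∫⁻ w, volume {y : (ℝ ∙ w.1)ᗮ |
        (y : EuclideanSpace ℝ (Fin (m + 1))) ∈ closedBall 0 1} ^ (m + 1) ∂sphMeasure (m + 1) =
      volume (euclideanBall m 1) ^ (m + 1) := by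
  have := isProbabilityMeasure_sphMeasure m
  simp only [volume_orthogonal_closedBall (ne_zero_of_mem_unit_sphere _), lintegral_const,
    measure_univ, mul_one]

theorem lintegral_sphMeasure_volume_section_mul_le {L : Set (EuclideanSpace ℝ (Fin (m + 1)))}
    (hL : MeasurableSet L) :
    (∫⁻ w, volume {y : (ℝ ∙ w.1)ᗮ | (y : EuclideanSpace ℝ (Fin (m + 1))) ∈ L} ^ (m + 1)
        ∂sphMeasure (m + 1)) * volume (euclideanBall (m + 1) 1) ^ m ≤
      volume (euclideanBall m 1) ^ (m + 1) * volume L ^ m := by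
  obtain ⟨C, hC⟩ := exists_lintegral_sphMeasure_volume_section_eq m
  have hball := hC _ (measurableSet_closedBall (x := 0) (ε := 1))
  rw [lintegral_sphMeasure_volume_section_closedBall, toLp_preimage_closedBall] at hball
  have hgraph := detMoment_mul_lintegral_volume_graphSection_le
    ((PiLp.volume_preserving_toLp (Fin (m + 1))).measurable hL)
  rw [volume_preimage_toLp hL] at hgraph
  rw [hC L hL]
  set b := volume (euclideanBall m 1) ^ (m + 1)
  set D := detMoment (euclideanBall m 1)
  set I := ∫⁻ a, volume (graphSection (WithLp.toLp 2 ⁻¹' L) a) ^ (m + 1)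
  set J := ∫⁻ a, volume (graphSection (euclideanBall (m + 1) 1) a) ^ (m + 1)
  have hJ : D * J = volume (euclideanBall (m + 1) 1) ^ m * b :=
    detMoment_mul_lintegral_volume_graphSection_euclideanBall m
  have hb0 : b ≠ 0 := pow_ne_zero _ (volume_euclideanBall_one_ne_zero m)
  have hbtop : b ≠ ⊤ := ENNReal.pow_ne_top (volume_euclideanBall_ne_top m 1)
  refine (ENNReal.mul_le_mul_iff_left hb0 hbtop).1 ?_
  calc C * I * volume (euclideanBall (m + 1) 1) ^ m * b = C * I * (D * J) := by
        rw [hJ, mul_assoc]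
    _ = C * J * (D * I) := by ring
    _ = b * (D * I) := by rw [← hball]
    _ ≤ b * (volume L ^ m * b) := by gcongr
    _ = b * volume L ^ m * b := by rw [mul_assoc]

end Busemann

theorem stmt12_general {m : ℕ} {L : Set (EuclideanSpace ℝ (Fin (m + 1)))}
    (hL : MeasurableSet L) :
    ∫⁻ w, volume {y : (ℝ ∙ w.1)ᗮ | (y : EuclideanSpace ℝ (Fin (m + 1))) ∈ L} ^ (m + 1)
        ∂sphMeasure (m + 1) ≤
      .ofReal (ballVol m ^ (m + 1) / ballVol (m + 1) ^ m) * volume L ^ m := by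
  rw [ENNReal.ofReal_div_of_pos (pow_pos (ballVol_pos _) _), ENNReal.ofReal_pow (ballVol_pos _).le,
    ENNReal.ofReal_pow (ballVol_pos _).le, ← volume_euclideanBall_one, ← volume_euclideanBall_one,
    ← ENNReal.mul_div_right_comm, ENNReal.le_div_iff_mul_le
      (.inl (pow_ne_zero _ (volume_euclideanBall_one_ne_zero _)))
      (.inl (ENNReal.pow_ne_top (volume_euclideanBall_ne_top _ _)))]
  exact lintegral_sphMeasure_volume_section_mul_le hL

/-- The Busemann intersection inequality, case `k = n-1`, for an arbitrary (not necessarily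
bounded) star set of finite measure: the central hyperplane sections satisfy
`∫_{S^{n-1}} V_{n-1}(L ∩ w^⊥)^n d*w ≤ (b_{n-1}^n / b_n^{n-1}) V_n(L)^{n-1}`. -/
theorem stmt12 (n : ℕ) (hn : 2 ≤ n) (L : Set (EuclideanSpace ℝ (Fin n)))
    (hL : MeasurableSet L)
    (hstar : ∀ x ∈ L, ∀ lam : ℝ, 0 ≤ lam → lam ≤ 1 → lam • x ∈ L)
    (hfin : volume L < ⊤) :
    (∫⁻ w, (volume {y : ((ℝ ∙ (w : EuclideanSpace ℝ (Fin n)))ᗮ) |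
        (y : EuclideanSpace ℝ (Fin n)) ∈ L}) ^ n ∂(sphMeasure n)) ≤
      ENNReal.ofReal (ballVol (n - 1) ^ n / ballVol n ^ (n - 1)) * volume L ^ (n - 1) := by
  obtain ⟨m, rfl⟩ := Nat.exists_eq_add_of_le' (Nat.one_le_of_lt hn)
  exact stmt12_general hL
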